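/- arXiv:1303.5557 — 3 statements merged into one kernel-verified Lean document; each statement's English description precedes it below -/
import Mathlib

section
/- Let φ and ψ be pure states on a C*-algebra A with ‖φ − ψ‖ < 2. Then the GNS representations π_φ and π_ψ are unitarily equivalent. -/
open NormedSpace
open scoped ComplexInnerProductSpace

variable {A : Type*} [NonUnitalCStarAlgebra A] [StarModule ℂ A]

/-- A state on a C*-algebra: a positive linear functional of norm one. -/
def IsState (φ : A →L[ℂ] ℂ) : Prop :=
  ‖φ‖ = 1 ∧ ∀ a : A, 0 ≤ (φ (star a * a)).re ∧ (φ (star a * a)).im = 0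

/-- A pure state is an extreme point of the state space. -/
def IsPureState (φ : A →L[ℂ] ℂ) : Prop :=
  φ ∈ Set.extremePoints ℝ {ψ : A →L[ℂ] ℂ | IsState ψ}

/-- `(π, v)` is a GNS representation for the state `φ`: `v` is a unit cyclic vector for the
star representation `π` on the Hilbert space `H` and `φ a = ⟨v, π(a) v⟩`. -/
def IsGNSRep (φ : A →L[ℂ] ℂ) {H : Type*} [NormedAddCommGroup H] [InnerProductSpace ℂ H]
    [CompleteSpace H] (π : A →⋆ₙₐ[ℂ] (H →L[ℂ] H)) (v : H) : Prop :=
  ‖v‖ = 1 ∧ (∀ a : A, φ a = ⟪v, π a v⟫) ∧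
    Dense ((Submodule.span ℂ (Set.range fun a : A => π a v) : Submodule ℂ H) : Set H)

/-- Two representations are unitarily equivalent. -/
def UnitarilyEquiv {H K : Type*} [NormedAddCommGroup H] [InnerProductSpace ℂ H]
    [CompleteSpace H] [NormedAddCommGroup K] [InnerProductSpace ℂ K] [CompleteSpace K]
    (π : A →⋆ₙₐ[ℂ] (H →L[ℂ] H)) (ρ : A →⋆ₙₐ[ℂ] (K →L[ℂ] K)) : Prop :=
  ∃ U : H ≃ₗᵢ[ℂ] K, ∀ (a : A) (x : H), U (π a x) = ρ a (U x)


section Helpers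

set_option linter.unusedSectionVars false
set_option linter.overlappingInstances false

variable {H : Type*} [NormedAddCommGroup H] [InnerProductSpace ℂ H] [CompleteSpace H]
variable {K : Type*} [NormedAddCommGroup K] [InnerProductSpace ℂ K] [CompleteSpace K]

/-- Block diagonal operator on the Hilbert sum. -/
noncomputable def diagOp (S : H →L[ℂ] H) (T : K →L[ℂ] K) :
    WithLp 2 (H × K) →L[ℂ] WithLp 2 (H × K) :=
  ((WithLp.prodContinuousLinearEquiv 2 ℂ H K).symm : H × K →L[ℂ] WithLp 2 (H × K)) ∘L
    (S.prodMap T) ∘L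
    ((WithLp.prodContinuousLinearEquiv 2 ℂ H K) : WithLp 2 (H × K) →L[ℂ] H × K)

lemma diagOp_fst (S : H →L[ℂ] H) (T : K →L[ℂ] K) (x : WithLp 2 (H × K)) :
    (diagOp S T x).fst = S x.fst := rfl

lemma diagOp_snd (S : H →L[ℂ] H) (T : K →L[ℂ] K) (x : WithLp 2 (H × K)) :
    (diagOp S T x).snd = T x.snd := rfl

lemma prodL2_ext {x y : WithLp 2 (H × K)} (h1 : x.fst = y.fst) (h2 : x.snd = y.snd) : x = y :=
  WithLp.ofLp_injective 2 (Prod.ext h1 h2)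

lemma rep_inner (π : A →⋆ₙₐ[ℂ] (H →L[ℂ] H)) (a : A) (x y : H) :
    ⟪π a x, y⟫ = ⟪x, π (star a) y⟫ := by
  rw [map_star, ContinuousLinearMap.star_eq_adjoint, ContinuousLinearMap.adjoint_inner_right]

/-- Direct sum of representations. -/
noncomputable def dsum (π : A →⋆ₙₐ[ℂ] (H →L[ℂ] H)) (ρ : A →⋆ₙₐ[ℂ] (K →L[ℂ] K)) :
    A →⋆ₙₐ[ℂ] (WithLp 2 (H × K) →L[ℂ] WithLp 2 (H × K)) where
  toFun a := diagOp (π a) (ρ a)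
  map_smul' c a := by
    ext x
    apply prodL2_ext <;> simp [diagOp_fst, diagOp_snd]
  map_zero' := by
    ext x
    apply prodL2_ext <;> simp [diagOp_fst, diagOp_snd]
  map_add' a b := by
    ext x
    apply prodL2_ext <;> simp [diagOp_fst, diagOp_snd]
  map_mul' a b := by
    ext x
    apply prodL2_ext <;> simp [diagOp_fst, diagOp_snd]
  map_star' a := by
    rw [ContinuousLinearMap.star_eq_adjoint, ContinuousLinearMap.eq_adjoint_iff]
    intro x y
    rw [WithLp.prod_inner_apply, WithLp.prod_inner_apply]
    simp only [diagOp_fst, diagOp_snd, WithLp.ofLp_fst, WithLp.ofLp_snd]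
    rw [rep_inner, rep_inner, star_star]

lemma dsum_apply (π : A →⋆ₙₐ[ℂ] (H →L[ℂ] H)) (ρ : A →⋆ₙₐ[ℂ] (K →L[ℂ] K)) (a : A) :
    dsum π ρ a = diagOp (π a) (ρ a) := rfl

/-- `X` intertwines. -/
def Intertw (π : A →⋆ₙₐ[ℂ] (H →L[ℂ] H)) (ρ : A →⋆ₙₐ[ℂ] (K →L[ℂ] K)) (X : H →L[ℂ] K) : Prop :=
  ∀ a x, X (π a x) = ρ a (X x)

/-- Naturality of the pair `S, T` with respect to all intertwiners. -/
def NatPair (π : A →⋆ₙₐ[ℂ] (H →L[ℂ] H)) (ρ : A →⋆ₙₐ[ℂ] (K →L[ℂ] K))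
    (S : H →L[ℂ] H) (T : K →L[ℂ] K) : Prop :=
  ∀ X : H →L[ℂ] K, Intertw π ρ X → ∀ x, X (S x) = T (X x)

/-- first injection -/
noncomputable def inlL (H K : Type*) [NormedAddCommGroup H] [InnerProductSpace ℂ H]
    [NormedAddCommGroup K] [InnerProductSpace ℂ K] : H →L[ℂ] WithLp 2 (H × K) :=
  ((WithLp.prodContinuousLinearEquiv 2 ℂ H K).symm : H × K →L[ℂ] WithLp 2 (H × K)) ∘L
    ContinuousLinearMap.inl ℂ H K

/-- second injection -/
noncomputable def inrL (H K : Type*) [NormedAddCommGroup H] [InnerProductSpace ℂ H]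
    [NormedAddCommGroup K] [InnerProductSpace ℂ K] : K →L[ℂ] WithLp 2 (H × K) :=
  ((WithLp.prodContinuousLinearEquiv 2 ℂ H K).symm : H × K →L[ℂ] WithLp 2 (H × K)) ∘L
    ContinuousLinearMap.inr ℂ H K

/-- first projection -/
noncomputable def pfstL (H K : Type*) [NormedAddCommGroup H] [InnerProductSpace ℂ H]
    [NormedAddCommGroup K] [InnerProductSpace ℂ K] : WithLp 2 (H × K) →L[ℂ] H :=
  ContinuousLinearMap.fst ℂ H K ∘L
    ((WithLp.prodContinuousLinearEquiv 2 ℂ H K) : WithLp 2 (H × K) →L[ℂ] H × K)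

/-- second projection -/
noncomputable def psndL (H K : Type*) [NormedAddCommGroup H] [InnerProductSpace ℂ H]
    [NormedAddCommGroup K] [InnerProductSpace ℂ K] : WithLp 2 (H × K) →L[ℂ] K :=
  ContinuousLinearMap.snd ℂ H K ∘L
    ((WithLp.prodContinuousLinearEquiv 2 ℂ H K) : WithLp 2 (H × K) →L[ℂ] H × K)

lemma pfstL_apply (x : WithLp 2 (H × K)) : pfstL H K x = x.fst := rfl
lemma psndL_apply (x : WithLp 2 (H × K)) : psndL H K x = x.snd := rfl

lemma diagOp_inl (S : H →L[ℂ] H) (T : K →L[ℂ] K) (x : H) :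
    diagOp S T (inlL H K x) = inlL H K (S x) := by
  apply prodL2_ext
  · rfl
  · change T 0 = 0
    simp

lemma diagOp_inr (S : H →L[ℂ] H) (T : K →L[ℂ] K) (x : K) :
    diagOp S T (inrL H K x) = inrL H K (T x) := by
  apply prodL2_ext
  · change S 0 = 0
    simp
  · rfl

lemma inl_add_inr (x : WithLp 2 (H × K)) : x = inlL H K x.fst + inrL H K x.snd := by
  apply prodL2_ext
  · change x.fst = x.fst + 0
    simp
  · change x.snd = 0 + x.snd
    simp

lemma natPair_dsum (π : A →⋆ₙₐ[ℂ] (H →L[ℂ] H)) (ρ : A →⋆ₙₐ[ℂ] (K →L[ℂ] K))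
    (S : H →L[ℂ] H) (T : K →L[ℂ] K)
    (h11 : NatPair π π S S) (h12 : NatPair π ρ S T) (h21 : NatPair ρ π T S)
    (h22 : NatPair ρ ρ T T) :
    NatPair (dsum π ρ) (dsum π ρ) (diagOp S T) (diagOp S T) := by
  intro X hX x
  have h1 : ∀ x : H, X (inlL H K (S x)) = diagOp S T (X (inlL H K x)) := by
    intro x
    apply prodL2_ext
    · refine h11 (pfstL H K ∘L X ∘L inlL H K) ?_ x
      intro a y
      have := hX a (inlL H K y)
      rw [dsum_apply, diagOp_inl] at this
      simp [this, pfstL_apply, diagOp_fst]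
    · refine h12 (psndL H K ∘L X ∘L inlL H K) ?_ x
      intro a y
      have := hX a (inlL H K y)
      rw [dsum_apply, diagOp_inl] at this
      simp [this, psndL_apply, diagOp_snd]
  have h2 : ∀ x : K, X (inrL H K (T x)) = diagOp S T (X (inrL H K x)) := by
    intro x
    apply prodL2_ext
    · refine h21 (pfstL H K ∘L X ∘L inrL H K) ?_ x
      intro a y
      have := hX a (inrL H K y)
      rw [dsum_apply, diagOp_inr] at this
      simp [this, pfstL_apply, diagOp_fst]
    · refine h22 (psndL H K ∘L X ∘L inrL H K) ?_ x
      intro a y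
      have := hX a (inrL H K y)
      rw [dsum_apply, diagOp_inr] at this
      simp [this, psndL_apply, diagOp_snd]
  rw [inl_add_inr x]
  simp only [map_add, diagOp_inl, diagOp_inr, h1, h2]

/-- Nondegeneracy. -/
def Nondeg (π : A →⋆ₙₐ[ℂ] (H →L[ℂ] H)) : Prop := ∀ x, (∀ a, π a x = 0) → x = 0

lemma nondeg_dsum {π : A →⋆ₙₐ[ℂ] (H →L[ℂ] H)} {ρ : A →⋆ₙₐ[ℂ] (K →L[ℂ] K)}
    (h1 : Nondeg π) (h2 : Nondeg ρ) : Nondeg (dsum π ρ) := by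
  intro x hx
  apply prodL2_ext
  · exact h1 _ fun a => congrArg (fun z => z.fst) (hx a)
  · exact h2 _ fun a => congrArg (fun z => z.snd) (hx a)

/-- Double commutant theorem at a vector. -/
lemma double_comm (σ : A →⋆ₙₐ[ℂ] (H →L[ℂ] H)) (hσ : Nondeg σ) (T : H →L[ℂ] H)
    (hT : NatPair σ σ T T) (ξ η : H) (hη : ∀ a, ⟪η, σ a ξ⟫ = 0) : ⟪η, T ξ⟫ = 0 := by
  let M0 : Submodule ℂ H := LinearMap.range
    ({ toFun := fun a => σ a ξ
       map_add' := by intro a b; simp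
       map_smul' := by intro a b; simp } : A →ₗ[ℂ] H)
  let M : Submodule ℂ H := M0ᗮ
  have memM : ∀ x, x ∈ M ↔ ∀ a, ⟪x, σ a ξ⟫ = 0 := by
    intro x
    rw [Submodule.mem_orthogonal']
    constructor
    · intro h a
      exact h _ ⟨a, rfl⟩
    · rintro h _ ⟨a, rfl⟩
      exact h a
  have inv : ∀ a x, x ∈ M → σ a x ∈ M := by
    intro a x hx
    rw [memM] at hx ⊢
    intro b
    rw [rep_inner]
    have := hx (star a * b)
    simpa using this
  have invo : ∀ a x, x ∈ Mᗮ → σ a x ∈ Mᗮ := by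
    intro a x hx
    rw [Submodule.mem_orthogonal'] at hx ⊢
    intro u hu
    rw [rep_inner]
    exact hx _ (inv _ _ hu)
  have hP : Intertw σ σ M.starProjection := by
    intro a x
    apply Submodule.eq_starProjection_of_mem_orthogonal
    · exact inv _ _ (Submodule.starProjection_apply_mem _ _)
    · rw [← map_sub]
      exact invo _ _ (Submodule.sub_starProjection_mem_orthogonal _)
  have hPξ : M.starProjection ξ = 0 := by
    apply hσ
    intro a
    rw [← hP, Submodule.starProjection_apply_eq_zero_iff, Submodule.mem_orthogonal]
    intro u hu
    exact (memM u).1 hu a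
  have h := hT _ hP ξ
  rw [hPξ, map_zero, Submodule.starProjection_apply_eq_zero_iff, Submodule.mem_orthogonal] at h
  exact h η ((memM η).2 hη)

lemma nondeg_of_gns {φ : A →L[ℂ] ℂ} {π : A →⋆ₙₐ[ℂ] (H →L[ℂ] H)} {v : H} (h : IsGNSRep φ π v) :
    Nondeg π := by
  intro x hx
  apply h.2.2.eq_zero_of_inner_left (𝕜 := ℂ)
  intro y hy
  induction hy using Submodule.span_induction with
  | mem y hy =>
    obtain ⟨a, rfl⟩ := hy
    have := rep_inner π (star a) x v
    rw [star_star, hx] at this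
    simpa using this.symm
  | zero => simp
  | add x y _ _ h1 h2 => simp_all [inner_add_right]
  | smul c x _ h1 => simp_all [inner_smul_right]

lemma real_sep {E : Type*} [NormedAddCommGroup E] [InnerProductSpace ℝ E] [CompleteSpace E]
    (N : Submodule ℝ E) (x : E)
    (h : ∀ η : E, (∀ y ∈ N, inner ℝ η y = 0) → inner ℝ η x = 0) : x ∈ closure (N : Set E) := by
  change x ∈ N.topologicalClosure
  rw [← Submodule.orthogonal_orthogonal_eq_closure, Submodule.mem_orthogonal]
  intro η hη
  rw [Submodule.mem_orthogonal'] at hη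
  exact h η hη

lemma sa_approx (σ : A →⋆ₙₐ[ℂ] (H →L[ℂ] H)) (hσ : Nondeg σ) (T : H →L[ℂ] H)
    (hT : NatPair σ σ T T) (hsa : ∀ x y, ⟪T x, y⟫ = ⟪x, T y⟫) (ξ : H) (ε : ℝ) (hε : 0 < ε) :
    ∃ b : A, IsSelfAdjoint b ∧ ‖σ b ξ - T ξ‖ < ε := by
  let f : A →ₗ[ℝ] H :=
    { toFun := fun a => σ a ξ
      map_add' := by intro a b; simp
      map_smul' := by
        intro r a
        have : r • a = (r : ℂ) • a := by simp
        rw [this, map_smul]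
        simp }
  let N : Submodule ℝ H := Submodule.map f (selfAdjoint.submodule ℝ A)
  have key' : T ξ ∈ closure (N : Set H) := by
    let : InnerProductSpace ℝ H := InnerProductSpace.complexToReal
    apply real_sep
    intro η hη
    have h0 : ∀ b : A, IsSelfAdjoint b → (⟪η, σ b ξ⟫).re = 0 := by
      intro b hb
      have := hη (σ b ξ) ⟨b, hb, rfl⟩
      rwa [real_inner_eq_re_inner (𝕜 := ℂ)] at this
    have h1 : ∀ a : A, ⟪η, σ a ξ⟫ + ⟪ξ, σ a η⟫ = 0 := by
      intro a
      have e1 : ⟪ξ, σ a η⟫ = (starRingEnd ℂ) ⟪η, σ (star a) ξ⟫ := by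
        rw [inner_conj_symm, rep_inner, star_star]
      have e2 := h0 (a + star a) (IsSelfAdjoint.add_star_self a)
      have e3 := h0 (Complex.I • (a - star a)) (by
        rw [IsSelfAdjoint, star_smul, star_sub, star_star]
        simp only [Complex.star_def, Complex.conj_I]
        rw [neg_smul, ← smul_neg, neg_sub])
      rw [e1]
      simp only [map_add, map_sub, map_smul, _root_.add_apply,
        _root_.sub_apply, _root_.smul_apply, inner_add_right,
        inner_sub_right, inner_smul_right, Complex.add_re, Complex.sub_re, Complex.mul_re,
        Complex.I_re, Complex.I_im, Complex.sub_im] at e2 e3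
      apply Complex.ext
      · simp only [Complex.add_re, Complex.conj_re, Complex.zero_re]
        linarith
      · simp only [Complex.add_im, Complex.conj_im, Complex.zero_im]
        linarith
    have h2 := double_comm (dsum σ σ) (nondeg_dsum hσ hσ) (diagOp T T)
      (natPair_dsum σ σ T T hT hT hT hT) (inlL H H ξ + inrL H H η) (inlL H H η + inrL H H ξ) (by
        intro a
        rw [dsum_apply, map_add, diagOp_inl, diagOp_inr, WithLp.prod_inner_apply]
        have := h1 a
        simpa [inlL, inrL] using this)
    rw [map_add, diagOp_inl, diagOp_inr, WithLp.prod_inner_apply] at h2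
    have h3 : ⟪η, T ξ⟫ + ⟪ξ, T η⟫ = 0 := by simpa [inlL, inrL] using h2
    rw [← hsa ξ η, ← inner_conj_symm (T ξ) η] at h3
    have h4 := congrArg Complex.re h3
    simp only [Complex.add_re, Complex.conj_re, Complex.zero_re] at h4
    rw [real_inner_eq_re_inner (𝕜 := ℂ)]
    change (⟪η, T ξ⟫).re = 0
    linarith
  obtain ⟨y, ⟨b, hb, rfl⟩, hy⟩ := Metric.mem_closure_iff.1 key' ε hε
  refine ⟨b, hb, ?_⟩
  rw [dist_comm, dist_eq_norm] at hy
  exact hy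

lemma kaplansky (b : A) (hb : IsSelfAdjoint b) :
    ∃ c : A, ‖c‖ ≤ 1 ∧ ‖c * b‖ ≤ 2 ∧ c + c * b * b = b + b := by
  have hpos : ∀ t : ℝ, 0 < 1 + t ^ 2 := fun t => by positivity
  have hc : Continuous fun t : ℝ => 2 * t / (1 + t ^ 2) :=
    Continuous.div (by fun_prop) (by fun_prop) fun t => (hpos t).ne'
  have hid : cfcₙ (fun t : ℝ => t) b = b := cfcₙ_id' ℝ b
  have e1 : cfcₙ (fun t : ℝ => 2 * t / (1 + t ^ 2)) b * b =
      cfcₙ (fun t : ℝ => 2 * t / (1 + t ^ 2) * t) b := by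
    rw [cfcₙ_mul (fun t : ℝ => 2 * t / (1 + t ^ 2)) (fun t : ℝ => t) b hc.continuousOn (by simp)
      continuousOn_id (by simp), hid]
  have e2 : cfcₙ (fun t : ℝ => 2 * t / (1 + t ^ 2)) b * b * b =
      cfcₙ (fun t : ℝ => 2 * t / (1 + t ^ 2) * t * t) b := by
    rw [cfcₙ_mul (fun t : ℝ => 2 * t / (1 + t ^ 2) * t) (fun t : ℝ => t) b
      (hc.mul continuous_id).continuousOn (by simp) continuousOn_id (by simp), hid, e1]
  have e3 : b + b = cfcₙ (fun t : ℝ => t + t) b := by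
    rw [cfcₙ_add (a := b) (fun t : ℝ => t) (fun t : ℝ => t) continuousOn_id (by simp)
      continuousOn_id (by simp), hid]
  refine ⟨cfcₙ (fun t : ℝ => 2 * t / (1 + t ^ 2)) b, ?_, ?_, ?_⟩
  · apply norm_cfcₙ_le
    intro t _
    rw [Real.norm_eq_abs, abs_le, le_div_iff₀ (hpos t), div_le_iff₀ (hpos t)]
    constructor <;> nlinarith [sq_nonneg (t - 1), sq_nonneg (t + 1)]
  · rw [e1]
    apply norm_cfcₙ_le
    intro t _
    rw [Real.norm_eq_abs, abs_le, div_mul_eq_mul_div, le_div_iff₀ (hpos t), div_le_iff₀ (hpos t)]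
    constructor <;> nlinarith [sq_nonneg t]
  · rw [e2, e3, ← cfcₙ_add (a := b) (fun t : ℝ => 2 * t / (1 + t ^ 2))
      (fun t : ℝ => 2 * t / (1 + t ^ 2) * t * t) hc.continuousOn (by simp)
      ((hc.mul continuous_id).mul continuous_id).continuousOn (by simp)]
    congr 1
    ext t
    have := (hpos t).ne'
    field_simp
    try ring

lemma kap_approx (π : A →⋆ₙₐ[ℂ] (H →L[ℂ] H)) (v : H) (s : ℂ) (hs : s * s = 1) (hs' : ‖s‖ = 1)
    (b c : A) (hc : ‖c‖ ≤ 1) (hcb : ‖c * b‖ ≤ 2) (he : c + c * b * b = b + b) (ε : ℝ)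
    (hε : ‖π b v - s • v‖ ≤ ε) : ‖π c v - s • v‖ ≤ 3 * ε := by
  set δ := π b v - s • v with hδ
  have hb : π b v = s • v + δ := by rw [hδ]; abel
  have h1 : π c v + π (c * b) (π b v) = π b v + π b v := by
    have := congrArg (fun z => π z v) he
    simpa using this
  have h2 : π (c * b) (π b v) = π c v + s • π c δ + π (c * b) δ := by
    rw [hb, map_add, map_smul, map_mul]
    simp only [_root_.mul_apply_eq_comp]
    rw [hb, map_add, map_smul, smul_add, smul_smul, hs, one_smul]
  rw [h2, hb] at h1
  have h3 : (2 : ℂ) • (π c v - s • v) = (2 : ℂ) • δ - s • π c δ - π (c * b) δ := by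
    have : (2 : ℂ) • π c v + s • π c δ + π (c * b) δ = (2 : ℂ) • (s • v) + (2 : ℂ) • δ := by
      rw [two_smul, two_smul, two_smul]
      calc _ = π c v + (π c v + s • π c δ + π (c * b) δ) := by abel
        _ = _ := by rw [h1]; abel
    have h6 := sub_eq_zero.2 this
    rw [← sub_eq_zero, ← h6]
    module
  have n1 : ‖π c δ‖ ≤ ‖δ‖ := by
    calc ‖π c δ‖ ≤ ‖π c‖ * ‖δ‖ := (π c).le_opNorm δ
      _ ≤ 1 * ‖δ‖ := by gcongr; exact (NonUnitalStarAlgHom.norm_apply_le π c).trans hc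
      _ = _ := one_mul _
  have n2 : ‖π (c * b) δ‖ ≤ 2 * ‖δ‖ := by
    calc ‖π (c * b) δ‖ ≤ ‖π (c * b)‖ * ‖δ‖ := (π (c * b)).le_opNorm δ
      _ ≤ 2 * ‖δ‖ := by gcongr; exact (NonUnitalStarAlgHom.norm_apply_le π _).trans hcb
  have h4 := congrArg norm h3
  rw [norm_smul] at h4
  have h5 : ‖(2 : ℂ) • δ - s • π c δ - π (c * b) δ‖ ≤ 2 * ‖δ‖ + ‖δ‖ + 2 * ‖δ‖ := by
    calc _ ≤ ‖(2 : ℂ) • δ - s • π c δ‖ + ‖π (c * b) δ‖ := norm_sub_le _ _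
      _ ≤ ‖(2 : ℂ) • δ‖ + ‖s • π c δ‖ + ‖π (c * b) δ‖ := by gcongr; exact norm_sub_le _ _
      _ ≤ _ := by
        rw [norm_smul, norm_smul, hs', one_mul]
        gcongr
        simp
  have : ‖(2 : ℂ)‖ = 2 := by simp
  rw [this] at h4
  linarith [norm_nonneg δ]

/-- Vector functional. -/
noncomputable def vecFun (π : A →⋆ₙₐ[ℂ] (H →L[ℂ] H)) (x : H) : A →L[ℂ] ℂ :=
  LinearMap.mkContinuous
    { toFun := fun a => ⟪x, π a x⟫
      map_add' := by intro a b; simp [inner_add_right]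
      map_smul' := by intro a b; simp [inner_smul_right] } (‖x‖ ^ 2) (by
    intro a
    calc ‖⟪x, π a x⟫‖ ≤ ‖x‖ * ‖π a x‖ := norm_inner_le_norm _ _
      _ ≤ ‖x‖ * (‖π a‖ * ‖x‖) := by gcongr; exact (π a).le_opNorm x
      _ ≤ ‖x‖ * (‖a‖ * ‖x‖) := by gcongr; exact NonUnitalStarAlgHom.norm_apply_le π a
      _ = ‖x‖ ^ 2 * ‖a‖ := by ring)

lemma vecFun_apply (π : A →⋆ₙₐ[ℂ] (H →L[ℂ] H)) (x : H) (a : A) :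
    vecFun π x a = ⟪x, π a x⟫ := rfl

lemma vecFun_norm_le (π : A →⋆ₙₐ[ℂ] (H →L[ℂ] H)) (x : H) : ‖vecFun π x‖ ≤ ‖x‖ ^ 2 :=
  LinearMap.mkContinuous_norm_le _ (by positivity) _

lemma vecFun_pos (π : A →⋆ₙₐ[ℂ] (H →L[ℂ] H)) (x : H) (a : A) :
    vecFun π x (star a * a) = ((‖π a x‖ ^ 2 : ℝ) : ℂ) := by
  rw [vecFun_apply, map_mul, _root_.mul_apply_eq_comp, ← rep_inner, inner_self_eq_norm_sq_to_K]
  simp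

lemma isState_smul (π : A →⋆ₙₐ[ℂ] (H →L[ℂ] H)) (x : H) (hx : x ≠ 0)
    (h : ‖vecFun π x‖ = ‖x‖ ^ 2) : IsState ((‖x‖ ^ 2)⁻¹ • vecFun π x) := by
  have hx' : 0 < ‖x‖ := norm_pos_iff.2 hx
  refine ⟨?_, ?_⟩
  · rw [norm_smul, h, Real.norm_eq_abs, abs_of_pos (by positivity)]
    field_simp
  · intro a
    rw [_root_.smul_apply, vecFun_pos]
    constructor
    · rw [Complex.smul_re, Complex.ofReal_re, smul_eq_mul]
      positivity
    · rw [Complex.smul_im, Complex.ofReal_im, smul_zero]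

lemma eq_zero_of_gns {φ : A →L[ℂ] ℂ} {π : A →⋆ₙₐ[ℂ] (H →L[ℂ] H)} {v : H} (h : IsGNSRep φ π v)
    (z : H) (hz : ∀ a, ⟪v, π a z⟫ = 0) : z = 0 := by
  apply h.2.2.eq_zero_of_inner_left (𝕜 := ℂ)
  intro y hy
  induction hy using Submodule.span_induction with
  | mem y hy =>
    obtain ⟨a, rfl⟩ := hy
    have := hz (star a)
    rw [← rep_inner] at this
    rw [← inner_conj_symm, this, map_zero]
  | zero => simp
  | add x y _ _ h1 h2 => simp_all [inner_add_right]
  | smul c x _ h1 => simp_all [inner_smul_right]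

lemma pure_scalar {φ : A →L[ℂ] ℂ} (hφ : IsPureState φ) {π : A →⋆ₙₐ[ℂ] (H →L[ℂ] H)} {v : H}
    (hπ : IsGNSRep φ π v) (R Q : H →L[ℂ] H) (hRs : ∀ x y, ⟪R x, y⟫ = ⟪x, R y⟫)
    (hQs : ∀ x y, ⟪Q x, y⟫ = ⟪x, Q y⟫) (hR : Intertw π π R) (hQ : Intertw π π Q)
    (hRQ : ∀ x, R (R x) + Q (Q x) = x) (hRv : R v ≠ 0) (hQv : Q v ≠ 0) :
    ∃ t : ℂ, ∀ x, R (R x) = t • x := by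
  have hsum : φ = vecFun π (R v) + vecFun π (Q v) := by
    ext a
    rw [_root_.add_apply, vecFun_apply, vecFun_apply, hRs, hQs, hR, hQ, ← inner_add_right,
      ← map_add, hRQ, hπ.2.1]
  have hn : ‖R v‖ ^ 2 + ‖Q v‖ ^ 2 = 1 := by
    have h1 : ⟪R v, R v⟫ + ⟪Q v, Q v⟫ = ⟪v, v⟫ := by
      rw [hRs, hQs, ← inner_add_right, hRQ]
    rw [inner_self_eq_norm_sq_to_K, inner_self_eq_norm_sq_to_K, inner_self_eq_norm_sq_to_K,
      hπ.1] at h1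
    have h2 := congrArg Complex.re h1
    norm_num [← Complex.ofReal_pow] at h2
    exact h2
  have hstate : IsState φ := hφ.1
  have h1 : 1 ≤ ‖vecFun π (R v)‖ + ‖vecFun π (Q v)‖ := by
    rw [← hstate.1]
    conv_lhs => rw [hsum]
    exact norm_add_le _ _
  have nR := vecFun_norm_le π (R v)
  have nQ := vecFun_norm_le π (Q v)
  have sR := isState_smul π (R v) hRv (by linarith)
  have sQ := isState_smul π (Q v) hQv (by linarith)
  have pR : 0 < ‖R v‖ := norm_pos_iff.2 hRv
  have pQ : 0 < ‖Q v‖ := norm_pos_iff.2 hQv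
  have hext := (mem_extremePoints_iff_left.1 hφ).2 _ sR _ sQ
    ⟨‖R v‖ ^ 2, ‖Q v‖ ^ 2, by positivity, by positivity, hn, by
      rw [smul_smul, smul_smul, mul_inv_cancel₀ (by positivity), mul_inv_cancel₀ (by positivity),
        one_smul, one_smul, hsum]⟩
  have hz : R (R v) - ((‖R v‖ ^ 2 : ℝ) : ℂ) • v = 0 := by
    apply eq_zero_of_gns hπ
    intro a
    have h2 := congrArg (fun f : A →L[ℂ] ℂ => (‖R v‖ ^ 2) • f a) hext
    simp only [_root_.smul_apply, smul_smul] at h2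
    rw [mul_inv_cancel₀ (by positivity), one_smul, vecFun_apply, hRs, hR, hπ.2.1] at h2
    rw [map_sub, map_smul, inner_sub_right, inner_smul_right, h2, Complex.real_smul, sub_self]
  have hz' := sub_eq_zero.1 hz
  refine ⟨((‖R v‖ ^ 2 : ℝ) : ℂ), ?_⟩
  have : R ∘L R = ((‖R v‖ ^ 2 : ℝ) : ℂ) • ContinuousLinearMap.id ℂ H := by
    apply ContinuousLinearMap.ext_on hπ.2.2
    rintro _ ⟨a, rfl⟩
    change R (R (π a v)) = ((‖R v‖ ^ 2 : ℝ) : ℂ) • π a v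
    rw [hR, hR, hz', map_smul]
  intro x
  exact congrArg (fun f : H →L[ℂ] H => f x) this

lemma sa_scalar {φ : A →L[ℂ] ℂ} (hφ : IsPureState φ) {π : A →⋆ₙₐ[ℂ] (H →L[ℂ] H)} {v : H}
    (hπ : IsGNSRep φ π v) (X : H →L[ℂ] H) (hXs : IsSelfAdjoint X) (hX : Intertw π π X) :
    ∃ t : ℂ, ∀ x, X x = t • x := by
  set n : ℝ := ‖X‖ + 1 with hn
  have hnpos : 0 < n := by positivity
  have hspec : ∀ t ∈ spectrum ℝ X, |t| ≤ n := by
    intro t ht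
    have h1 := spectrum.norm_le_norm_mul_of_mem ht
    have h2 : ‖(1 : H →L[ℂ] H)‖ ≤ 1 := ContinuousLinearMap.norm_id_le
    rw [Real.norm_eq_abs] at h1
    nlinarith [norm_nonneg X]
  have hcomm : ∀ f : ℝ → ℝ, Intertw π π (cfc f X) := by
    intro f a x
    have hc : Commute X (π a) := by
      ext x
      exact hX a x
    exact congrArg (fun g : H →L[ℂ] H => g x) (hc.cfc_real f).eq
  have hsym : ∀ f : ℝ → ℝ, ∀ x y, ⟪cfc f X x, y⟫ = ⟪x, cfc f X y⟫ := by
    intro f x y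
    have : IsSelfAdjoint (cfc f X) := cfc_predicate f X
    exact (ContinuousLinearMap.isSelfAdjoint_iff_isSymmetric.1 this) x y
  have hsq : ∀ s : ℝ, |s| = 1 → ∀ x, cfc (fun t : ℝ => √(1 / 2 + s * t / (4 * n))) X
      (cfc (fun t : ℝ => √(1 / 2 + s * t / (4 * n))) X x)
        = (1 / 2 : ℂ) • x + ((s / (4 * n) : ℝ) : ℂ) • X x := by
    intro s hs x
    have h1 : cfc (fun t : ℝ => √(1 / 2 + s * t / (4 * n))) X *
        cfc (fun t : ℝ => √(1 / 2 + s * t / (4 * n))) X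
          = (1 / 2 : ℝ) • (1 : H →L[ℂ] H) + (s / (4 * n)) • X := by
      rw [← cfc_mul (fun t : ℝ => √(1 / 2 + s * t / (4 * n)))
        (fun t : ℝ => √(1 / 2 + s * t / (4 * n))) X (by fun_prop) (by fun_prop)]
      have e : cfc (fun t : ℝ => 1 / 2 + (s / (4 * n)) * t) X
          = (1 / 2 : ℝ) • (1 : H →L[ℂ] H) + (s / (4 * n)) • X := by
        rw [cfc_const_add (1 / 2 : ℝ) (fun t : ℝ => (s / (4 * n)) * t) X (by fun_prop),
          cfc_const_mul_id (s / (4 * n)) X, Algebra.algebraMap_eq_smul_one]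
      rw [← e]
      apply cfc_congr
      intro t ht
      have h2 := hspec t ht
      have h3 : |s * t / (4 * n)| ≤ 1 / 4 := by
        rw [abs_div, abs_mul, hs, one_mul, abs_of_pos (by positivity : 0 < 4 * n),
          div_le_iff₀ (by positivity)]
        linarith
      have h4 := abs_le.1 h3
      simp only
      rw [Real.mul_self_sqrt (by linarith)]
      ring
    have h2 := congrArg (fun g : H →L[ℂ] H => g x) h1
    have h3 : (1 / 2 : ℂ) = ((1 / 2 : ℝ) : ℂ) := by push_cast; rfl
    rw [h3, Complex.coe_smul, Complex.coe_smul]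
    exact h2
  have hne : ∀ s : ℝ, |s| = 1 → cfc (fun t : ℝ => √(1 / 2 + s * t / (4 * n))) X v ≠ 0 := by
    intro s hs h0
    have h1 := hsq s hs v
    rw [h0, map_zero] at h1
    have h2 : (1 / 2 : ℂ) • v = - (((s / (4 * n) : ℝ) : ℂ) • X v) :=
      eq_neg_of_add_eq_zero_left h1.symm
    have h3 := congrArg norm h2
    rw [norm_neg, norm_smul, norm_smul, hπ.1, Complex.norm_real, Real.norm_eq_abs, abs_div, hs,
      abs_of_pos (by positivity : 0 < 4 * n)] at h3
    have h4 := X.le_opNorm v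
    rw [hπ.1, mul_one] at h4
    have h5 : 1 / (4 * n) * ‖X v‖ ≤ 1 / 4 := by
      rw [one_div_mul_eq_div, div_le_iff₀ (by positivity)]
      linarith
    norm_num at h3
    norm_num at h5
    linarith
  obtain ⟨t, ht⟩ := pure_scalar hφ hπ (cfc (fun t : ℝ => √(1 / 2 + 1 * t / (4 * n))) X)
    (cfc (fun t : ℝ => √(1 / 2 + (-1) * t / (4 * n))) X) (hsym _) (hsym _) (hcomm _) (hcomm _)
    (by
      intro x
      rw [hsq 1 (by simp), hsq (-1) (by simp)]
      push_cast
      module) (hne 1 (by simp)) (hne (-1) (by simp))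
  refine ⟨(4 * n : ℂ) * (t - 1 / 2), fun x => ?_⟩
  have h1 := ht x
  rw [hsq 1 (by simp)] at h1
  rw [mul_smul, sub_smul, ← h1, add_sub_cancel_left, smul_smul]
  have : (4 * n : ℂ) * ((1 / (4 * n) : ℝ) : ℂ) = 1 := by
    have : (n : ℂ) ≠ 0 := by exact_mod_cast hnpos.ne'
    push_cast
    field_simp
  rw [this, one_smul]

lemma intertw_adjoint {π : A →⋆ₙₐ[ℂ] (H →L[ℂ] H)} {ρ : A →⋆ₙₐ[ℂ] (K →L[ℂ] K)} {X : H →L[ℂ] K}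
    (hX : Intertw π ρ X) : Intertw ρ π (ContinuousLinearMap.adjoint X) := by
  intro a y
  apply ext_inner_right ℂ
  intro x
  rw [ContinuousLinearMap.adjoint_inner_left, rep_inner, rep_inner, ← hX,
    ContinuousLinearMap.adjoint_inner_left]

lemma schur {φ ψ : A →L[ℂ] ℂ} (hφ : IsPureState φ) (hψ : IsPureState ψ)
    {π : A →⋆ₙₐ[ℂ] (H →L[ℂ] H)} {v : H} (hπ : IsGNSRep φ π v)
    {ρ : A →⋆ₙₐ[ℂ] (K →L[ℂ] K)} {w : K} (hρ : IsGNSRep ψ ρ w)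
    (X : H →L[ℂ] K) (hX : Intertw π ρ X) (hX0 : X ≠ 0) : UnitarilyEquiv π ρ := by
  have hX' := intertw_adjoint hX
  obtain ⟨c, hc⟩ := sa_scalar hφ hπ (ContinuousLinearMap.adjoint X ∘L X) (by
      rw [ContinuousLinearMap.isSelfAdjoint_iff', ContinuousLinearMap.adjoint_comp,
        ContinuousLinearMap.adjoint_adjoint])
    (fun a x => by
      change ContinuousLinearMap.adjoint X (X (π a x)) = π a (ContinuousLinearMap.adjoint X (X x))
      rw [hX, hX'])
  obtain ⟨d, hd⟩ := sa_scalar hψ hρ (X ∘L ContinuousLinearMap.adjoint X) (by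
      rw [ContinuousLinearMap.isSelfAdjoint_iff', ContinuousLinearMap.adjoint_comp,
        ContinuousLinearMap.adjoint_adjoint])
    (fun a x => by
      change X (ContinuousLinearMap.adjoint X (ρ a x)) = ρ a (X (ContinuousLinearMap.adjoint X x))
      rw [hX', hX])
  simp only [ContinuousLinearMap.comp_apply] at hc hd
  obtain ⟨x0, hx0⟩ : ∃ x, X x ≠ 0 := by
    by_contra! h
    exact hX0 (ContinuousLinearMap.ext h)
  have hnorm : ∀ x, ((‖X x‖ ^ 2 : ℝ) : ℂ) = c * ((‖x‖ ^ 2 : ℝ) : ℂ) := by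
    intro x
    have h1 : ⟪x, ContinuousLinearMap.adjoint X (X x)⟫ = ⟪X x, X x⟫ :=
      ContinuousLinearMap.adjoint_inner_right X x (X x)
    rw [hc, inner_smul_right, inner_self_eq_norm_sq_to_K, inner_self_eq_norm_sq_to_K] at h1
    push_cast
    exact h1.symm
  have hcr : ∀ x, ‖X x‖ ^ 2 = c.re * ‖x‖ ^ 2 := by
    intro x
    have := congrArg Complex.re (hnorm x)
    rwa [Complex.ofReal_re, Complex.re_mul_ofReal] at this
  have hcd : d = c := by
    have h1 := hd (X x0)
    rw [hc, map_smul] at h1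
    have h2 : (d - c) • X x0 = 0 := by rw [sub_smul, h1, sub_self]
    rcases smul_eq_zero.1 h2 with h | h
    · exact sub_eq_zero.1 h
    · exact absurd h hx0
  have hcpos : 0 < c.re := by
    have h1 := hcr x0
    have h2 : 0 < ‖X x0‖ ^ 2 := by
      have := norm_pos_iff.2 hx0
      positivity
    by_contra h
    push Not at h
    nlinarith [sq_nonneg ‖x0‖]
  have hc0 : c ≠ 0 := by
    intro h
    rw [h] at hcpos
    simp at hcpos
  have hs : 0 < √c.re := Real.sqrt_pos.2 hcpos
  let U0 : H →ₗᵢ[ℂ] K :=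
    { toLinearMap := ((((√c.re)⁻¹ : ℝ) : ℂ) • X : H →L[ℂ] K).toLinearMap
      norm_map' := by
        intro x
        change ‖(((√c.re)⁻¹ : ℝ) : ℂ) • X x‖ = ‖x‖
        rw [norm_smul, Complex.norm_real, Real.norm_eq_abs, abs_of_pos (by positivity)]
        have : ‖X x‖ = √c.re * ‖x‖ := by
          rw [← Real.sqrt_sq (norm_nonneg (X x)), hcr, Real.sqrt_mul hcpos.le,
            Real.sqrt_sq (norm_nonneg x)]
        rw [this, inv_mul_cancel_left₀ hs.ne'] }
  have hU0 : ∀ x, U0 x = (((√c.re)⁻¹ : ℝ) : ℂ) • X x := fun x => rfl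
  have hsurj : Function.Surjective U0 := by
    intro y
    refine ⟨((√c.re : ℝ) : ℂ) • c⁻¹ • ContinuousLinearMap.adjoint X y, ?_⟩
    rw [hU0, map_smul, map_smul, hd, hcd, smul_smul, smul_smul, smul_smul]
    have h1 : ((√c.re : ℝ) : ℂ) ≠ 0 := by exact_mod_cast hs.ne'
    have : (((√c.re)⁻¹ : ℝ) : ℂ) * ((√c.re : ℝ) : ℂ) * c⁻¹ * c = 1 := by
      push_cast
      field_simp
    rw [this, one_smul]
  refine ⟨LinearIsometryEquiv.ofSurjective U0 hsurj, ?_⟩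
  intro a x
  rw [LinearIsometryEquiv.coe_ofSurjective, hU0, hU0, hX, map_smul]

end Helpers

/-- If `φ` and `ψ` are pure states on a C*-algebra with `‖φ - ψ‖ < 2`, then their GNS
representations are unitarily equivalent. -/
theorem gns_equiv_of_pure_states_dist_lt_two
    (φ ψ : A →L[ℂ] ℂ) (hφ : IsPureState φ) (hψ : IsPureState ψ)
    (hdist : ‖φ - ψ‖ < 2)
    {H K : Type*} [NormedAddCommGroup H] [InnerProductSpace ℂ H] [CompleteSpace H]
    [NormedAddCommGroup K] [InnerProductSpace ℂ K] [CompleteSpace K]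
    (π : A →⋆ₙₐ[ℂ] (H →L[ℂ] H)) (v : H) (hπ : IsGNSRep φ π v)
    (ρ : A →⋆ₙₐ[ℂ] (K →L[ℂ] K)) (w : K) (hρ : IsGNSRep ψ ρ w) :
    UnitarilyEquiv π ρ := by
  by_contra hne
  have hz : ∀ X : H →L[ℂ] K, Intertw π ρ X → X = 0 := by
    intro X hX
    by_contra h
    exact hne (schur hφ hψ hπ hρ X hX h)
  have hz' : ∀ X : K →L[ℂ] H, Intertw ρ π X → X = 0 := by
    intro X hX
    have h := hz _ (intertw_adjoint hX)
    rw [← ContinuousLinearMap.adjoint_adjoint X, h, map_zero]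
  have hnat : NatPair (dsum π ρ) (dsum π ρ)
      (diagOp (ContinuousLinearMap.id ℂ H) (-ContinuousLinearMap.id ℂ K))
      (diagOp (ContinuousLinearMap.id ℂ H) (-ContinuousLinearMap.id ℂ K)) := by
    apply natPair_dsum
    · intro X _ x
      rfl
    · intro X hX x
      rw [hz X hX]
      simp
    · intro X hX x
      rw [hz' X hX]
      simp
    · intro X _ x
      simp
  set ε : ℝ := (2 - ‖φ - ψ‖) / 7 with hε
  have hεpos : 0 < ε := by
    rw [hε]
    linarith
  obtain ⟨b, hb, hbε⟩ := sa_approx (dsum π ρ) (nondeg_dsum (nondeg_of_gns hπ) (nondeg_of_gns hρ)) _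
    hnat (by
      intro x y
      rw [WithLp.prod_inner_apply, WithLp.prod_inner_apply]
      simp only [diagOp_fst, diagOp_snd, WithLp.ofLp_fst, WithLp.ofLp_snd]
      simp) (inlL H K v + inrL H K w) ε hεpos
  set D := dsum π ρ b (inlL H K v + inrL H K w) -
    diagOp (ContinuousLinearMap.id ℂ H) (-ContinuousLinearMap.id ℂ K)
      (inlL H K v + inrL H K w) with hD
  have hfst : D.fst = π b v - (1 : ℂ) • v := by
    rw [hD, dsum_apply]
    simp [diagOp_fst, inlL, inrL]
  have hsnd : D.snd = ρ b w - (-1 : ℂ) • w := by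
    rw [hD, dsum_apply]
    simp [diagOp_snd, inlL, inrL]
  have hDn := WithLp.prod_norm_sq_eq_of_L2 D
  have h1 : ‖π b v - (1 : ℂ) • v‖ ≤ ε := by
    rw [← hfst]
    refine le_trans ?_ hbε.le
    apply le_of_sq_le_sq _ (norm_nonneg _)
    nlinarith [sq_nonneg ‖D.snd‖]
  have h2 : ‖ρ b w - (-1 : ℂ) • w‖ ≤ ε := by
    rw [← hsnd]
    refine le_trans ?_ hbε.le
    apply le_of_sq_le_sq _ (norm_nonneg _)
    nlinarith [sq_nonneg ‖D.fst‖]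
  obtain ⟨c, hc1, hc2, hc3⟩ := kaplansky b hb
  have h3 := kap_approx π v 1 (by norm_num) (by norm_num) b c hc1 hc2 hc3 ε h1
  have h4 := kap_approx ρ w (-1) (by norm_num) (by norm_num) b c hc1 hc2 hc3 ε h2
  have e1 : φ c = 1 + ⟪v, π c v - (1 : ℂ) • v⟫ := by
    rw [inner_sub_right, one_smul, inner_self_eq_norm_sq_to_K, hπ.1, hπ.2.1]
    simp
  have e2 : ψ c = -1 + ⟪w, ρ c w - (-1 : ℂ) • w⟫ := by
    rw [inner_sub_right, inner_smul_right, inner_self_eq_norm_sq_to_K, hρ.1, hρ.2.1]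
    simp
  have n1 : ‖⟪v, π c v - (1 : ℂ) • v⟫‖ ≤ 3 * ε := by
    refine (norm_inner_le_norm _ _).trans ?_
    rw [hπ.1, one_mul]
    exact h3
  have n2 : ‖⟪w, ρ c w - (-1 : ℂ) • w⟫‖ ≤ 3 * ε := by
    refine (norm_inner_le_norm _ _).trans ?_
    rw [hρ.1, one_mul]
    exact h4
  have n3 : ‖(φ - ψ) c‖ ≤ ‖φ - ψ‖ := by
    refine ((φ - ψ).le_opNorm c).trans ?_
    exact mul_le_of_le_one_right (norm_nonneg _) hc1
  have e3 : (2 : ℂ) = (φ - ψ) c - ⟪v, π c v - (1 : ℂ) • v⟫ + ⟪w, ρ c w - (-1 : ℂ) • w⟫ := by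
    rw [_root_.sub_apply, e1, e2]
    ring
  have n4 : (2 : ℝ) ≤ ‖φ - ψ‖ + 3 * ε + 3 * ε := by
    calc (2 : ℝ) = ‖(2 : ℂ)‖ := by simp
      _ = ‖(φ - ψ) c - ⟪v, π c v - (1 : ℂ) • v⟫ + ⟪w, ρ c w - (-1 : ℂ) • w⟫‖ := by rw [← e3]
      _ ≤ ‖(φ - ψ) c - ⟪v, π c v - (1 : ℂ) • v⟫‖ + ‖⟪w, ρ c w - (-1 : ℂ) • w⟫‖ := norm_add_le _ _
      _ ≤ ‖(φ - ψ) c‖ + ‖⟪v, π c v - (1 : ℂ) • v⟫‖ + ‖⟪w, ρ c w - (-1 : ℂ) • w⟫‖ := by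
        gcongr
        exact norm_sub_le _ _
      _ ≤ _ := by gcongr
  linarith
end

section
/- Let A be a separable C*-algebra, π an irreducible representation of A on a Hilbert space H_π, and φ a state of A vanishing on π⁻¹(K(H_π)) (the preimage of the compact operators) with ker π ⊆ ker π_φ. Then there exists an orthonormal sequence (ξ_n) in H_π such that the vector states a ↦ ⟨π(a)ξ_n, ξ_n⟩ converge to φ in the weak* topology. -/
open NormedSpace Filter
open scoped ComplexInnerProductSpace

variable {A : Type*} [NonUnitalCStarAlgebra A] [StarModule ℂ A]

/-- A representation is (topologically) irreducible if it is nonzero and has no nontrivial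
closed invariant subspaces. -/
def IsIrreducibleRep {H : Type*} [NormedAddCommGroup H] [InnerProductSpace ℂ H]
    [CompleteSpace H] (π : A →⋆ₙₐ[ℂ] (H →L[ℂ] H)) : Prop :=
  π ≠ 0 ∧ ∀ S : Submodule ℂ H, IsClosed (S : Set H) →
    (∀ a : A, ∀ x ∈ S, π a x ∈ S) → S = ⊥ ∨ S = ⊤

section Helpers

theorem aux_cfc {B : Type*} [CStarAlgebra B] (b : B) (hb : IsSelfAdjoint b) :
    ∃ p q r : B, IsSelfAdjoint p ∧ IsSelfAdjoint q ∧ IsSelfAdjoint r ∧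
      b * p = p * p ∧ q * q = p ∧ r * r = p - b := by
  refine ⟨cfc (fun x : ℝ => max x 0) b, cfc (fun x : ℝ => √(max x 0)) b,
    cfc (fun x : ℝ => √(max (-x) 0)) b, cfc_predicate _ _, cfc_predicate _ _,
    cfc_predicate _ _, ?_, ?_, ?_⟩
  · conv_lhs => enter [1]; rw [← cfc_id' ℝ b]
    rw [← cfc_mul _ _ b, ← cfc_mul _ _ b]
    congr 1
    ext x
    rcases le_total x 0 with h | h <;> simp [h]
  · rw [← cfc_mul _ _ b]
    congr 1
    ext x
    exact Real.mul_self_sqrt (le_max_right _ _)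
  · conv_rhs => enter [2]; rw [← cfc_id' ℝ b]
    rw [← cfc_mul _ _ b, ← cfc_sub _ _ b]
    congr 1
    ext x
    rw [Real.mul_self_sqrt (le_max_right _ _)]
    rcases le_total x 0 with h | h <;> simp [h]

variable {H : Type*} [NormedAddCommGroup H] [InnerProductSpace ℂ H] [CompleteSpace H]

theorem aux_compact_of_inj (P : H →L[ℂ] H) (s : Finset H)
    (h : ∀ ζ, (∀ x ∈ s, ⟪x, P ζ⟫ = 0) → P ζ = 0) : IsCompactOperator P := by
  let F : H →ₗ[ℂ] (s → ℂ) := LinearMap.pi (fun x : s => (innerSL ℂ (x : H)).toLinearMap)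
  have hinj : Function.Injective (F.domRestrict P.range) := by
    rw [← LinearMap.ker_eq_bot, LinearMap.ker_eq_bot']
    rintro ⟨_, ζ, rfl⟩ hm
    apply Subtype.ext
    refine h ζ fun x hx => ?_
    have := congrFun hm ⟨x, hx⟩
    simpa [F] using this
  have : FiniteDimensional ℂ P.range := FiniteDimensional.of_injective _ hinj
  have hid : IsCompactOperator (_root_.id : P.range → P.range) :=
    isCompactOperator_id_iff_finiteDimensional (𝕜 := ℂ).2 this
  exact (hid.comp_clm (P.codRestrict P.range (fun x => ⟨x, rfl⟩))).clm_comp P.range.subtypeL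

theorem aux_compact (S P Q : H →L[ℂ] H) (hP : IsSelfAdjoint P) (hQ : IsSelfAdjoint Q)
    (h1 : S * P = P * P) (h2 : Q * Q = P) (s : Finset H)
    (h : ∀ ξ, (∀ x ∈ s, ⟪x, ξ⟫ = 0) → (⟪ξ, S ξ⟫).re ≤ 0) : IsCompactOperator P := by
  have sP : ∀ x y, ⟪P x, y⟫ = ⟪x, P y⟫ := fun x y => hP.isSymmetric x y
  have sQ : ∀ x y, ⟪Q x, y⟫ = ⟪x, Q y⟫ := fun x y => hQ.isSymmetric x y
  refine aux_compact_of_inj P s fun ζ hζ => ?_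
  have h3 := h _ hζ
  have e1 : S (P ζ) = P (P ζ) := congrArg (fun f : H →L[ℂ] H => f ζ) h1
  have e2 : ∀ x, Q (Q x) = P x := fun x => congrArg (fun f : H →L[ℂ] H => f x) h2
  rw [e1, ← e2 (P ζ), ← sQ] at h3
  have h4 : Q (P ζ) = 0 := by
    rw [← norm_eq_zero]
    rw [inner_self_eq_norm_sq_to_K] at h3
    norm_cast at h3
    have := sq_nonneg ‖Q (P ζ)‖
    have : ‖Q (P ζ)‖ ^ 2 = 0 := le_antisymm h3 this
    simpa using this
  have h5 : ⟪P ζ, P ζ⟫ = 0 := by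
    rw [sP, ← e2 (P ζ), h4]; simp
  exact inner_self_eq_zero.1 h5

theorem aux_unital {B : Type*} [CStarAlgebra B] (ρ : B →⋆ₐ[ℂ] (H →L[ℂ] H))
    (ψ : B →ₗ[ℂ] ℂ) (h1 : ψ 1 = 1) (hpos : ∀ b, 0 ≤ (ψ (star b * b)).re)
    (hstar : ∀ b, ψ (star b) = star (ψ b))
    (hc : ∀ b, IsCompactOperator (ρ b) → ψ b = 0) (a : B) (t : ℝ) (s : Finset H)
    (h : ∀ ξ, (∀ x ∈ s, ⟪x, ξ⟫ = 0) → (⟪ξ, ρ a ξ⟫).re ≤ t * ‖ξ‖ ^ 2) : (ψ a).re ≤ t := by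
  let b : B := (1 / 2 : ℂ) • (a + star a) - (t : ℂ) • 1
  have hb : IsSelfAdjoint b := by
    simp [b, isSelfAdjoint_iff, add_comm]
  obtain ⟨p, q, r, hp, hq, hr, e1, e2, e3⟩ := aux_cfc b hb
  have hcp : IsCompactOperator (ρ p) := by
    refine aux_compact (ρ b) (ρ p) (ρ q) (hp.map ρ) (hq.map ρ) (by rw [← map_mul, e1, map_mul])
      (by rw [← map_mul, e2]) s fun ξ hξ => ?_
    have := h ξ hξ
    have e : ⟪ξ, ρ (star a) ξ⟫ = star ⟪ξ, ρ a ξ⟫ := by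
      rw [map_star, ContinuousLinearMap.star_eq_adjoint,
        ContinuousLinearMap.adjoint_inner_right]
      exact (inner_conj_symm _ _).symm
    have e' : ⟪ξ, ξ⟫ = ((‖ξ‖ ^ 2 : ℝ) : ℂ) := by
      rw [inner_self_eq_norm_sq_to_K]; norm_cast
    have e4 : ⟪ξ, ρ b ξ⟫ = (1 / 2 : ℂ) * (⟪ξ, ρ a ξ⟫ + star ⟪ξ, ρ a ξ⟫)
        - (t : ℂ) * ((‖ξ‖ ^ 2 : ℝ) : ℂ) := by
      rw [← e, ← e']
      simp only [b, map_sub, map_smul, map_add, map_one, ContinuousLinearMap.sub_apply,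
        ContinuousLinearMap.add_apply, ContinuousLinearMap.smul_apply,
        ContinuousLinearMap.one_apply, inner_sub_right, inner_add_right, inner_smul_right]
    rw [e4]
    generalize ‖ξ‖ ^ 2 = n at *
    generalize ⟪ξ, ρ a ξ⟫ = z at *
    simp
    linarith
  have h2 := hc p hcp
  have h3 := hpos r
  rw [hr.star_eq, e3] at h3
  simp [b, h1, h2, hstar] at h3
  linarith

theorem aux_conv {C : Type*} [NonUnitalCStarAlgebra C] (φ : C →L[ℂ] ℂ)
    (hφ : IsState φ) (π : C →⋆ₙₐ[ℂ] (H →L[ℂ] H))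
    (hvanish : ∀ a : C, IsCompactOperator (π a) → φ a = 0) :
    (∀ b, φ (star b) = star (φ b)) ∧
    (∀ (b : C) (z : ℂ), 0 ≤ ‖z‖ ^ 2 + 2 * (star z * φ b).re + (φ (star b * b)).re) ∧
    (∀ e : C, IsCompactOperator (π e - 1 : H →L[ℂ] H) → φ e = 1) := by
  obtain ⟨hn, hpos⟩ := hφ
  letI := CStarAlgebra.spectralOrder C
  haveI := CStarAlgebra.spectralOrderedRing C
  have hl := CStarAlgebra.increasingApproximateUnit C
  set l := CStarAlgebra.approximateUnit C
  haveI : l.NeBot := hl.neBot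
  have hle : ∀ x, ‖φ x‖ ≤ ‖x‖ := fun x => by simpa [hn] using φ.le_opNorm x
  have tl : ∀ b, Tendsto (fun u => φ (u * b)) l (nhds (φ b)) := fun b =>
    (φ.continuous.tendsto _).comp (hl.tendsto_mul_right b)
  have tr : ∀ b, Tendsto (fun u => φ (b * u)) l (nhds (φ b)) := fun b =>
    (φ.continuous.tendsto _).comp (hl.tendsto_mul_left b)
  have him : ∀ b, (φ b + φ (star b)).im = 0 := by
    intro b
    have ht : Tendsto (fun u => (φ (u * b) + φ (star b * u)).im) l
        (nhds ((φ b + φ (star b)).im)) :=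
      (Complex.continuous_im.tendsto _).comp ((tl b).add (tr (star b)))
    refine tendsto_nhds_unique ht (tendsto_const_nhds.congr' ?_)
    filter_upwards [hl.eventually_star_eq] with u hu
    have h0 := (hpos (u + b)).2
    have h1 := (hpos u).2
    have h2 := (hpos b).2
    simp only [star_add, mul_add, add_mul, map_add, hu, Complex.add_im] at h0 h1 h2 ⊢
    linarith
  have hst : ∀ b, φ (star b) = star (φ b) := by
    intro b
    have h1 := him b
    have h2 := him (Complex.I • b)
    simp at h1 h2
    apply Complex.ext
    · simp; linarith
    · simp; linarith
  have key : ∀ (u b : C) (z : ℂ), star u = u →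
      0 ≤ ‖z‖ ^ 2 * (φ (u * u)).re + 2 * (star z * φ (u * b)).re + (φ (star b * b)).re := by
    intro u b z hu
    have h0 := (hpos (z • u + b)).1
    have h3 : φ (star b * u) = star (φ (u * b)) := by rw [← hst]; simp [hu]
    have h4 := (hpos u).2
    rw [hu] at h4
    have hz : ‖z‖ ^ 2 = z.re * z.re + z.im * z.im := by
      rw [← Complex.normSq_eq_norm_sq, Complex.normSq_apply]
    rw [hz]
    simp [mul_add, add_mul, hu, h3, smul_mul_assoc, mul_smul_comm, h4] at h0 ⊢
    linarith
  refine ⟨hst, ?_, ?_⟩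
  · intro b z
    have ht : Tendsto (fun u => ‖z‖ ^ 2 + 2 * (star z * φ (u * b)).re + (φ (star b * b)).re) l
        (nhds (‖z‖ ^ 2 + 2 * (star z * φ b).re + (φ (star b * b)).re)) :=
      ((((Complex.continuous_re.tendsto _).comp ((tl b).const_mul (star z))).const_mul
        2).const_add _).add_const _
    refine ge_of_tendsto ht ?_
    filter_upwards [hl.eventually_star_eq, hl.eventually_norm] with u hu hu1
    have h0 := key u b z hu
    have h1 : (φ (u * u)).re ≤ 1 := by
      refine (Complex.re_le_norm _).trans ((hle _).trans ((norm_mul_le _ _).trans ?_))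
      nlinarith [norm_nonneg u]
    nlinarith [sq_nonneg ‖z‖]
  · intro e he
    have heb : ∀ b, φ (e * b) = φ b := by
      intro b
      have : IsCompactOperator (π (e * b - b)) := by
        have h := he.comp_clm (π b)
        have e0 : (π (e * b - b) : H → H) = (π e - 1 : H →L[ℂ] H) ∘ (π b) := by
          funext x
          simp
        rw [e0]
        exact h
      have := hvanish _ this
      rw [map_sub] at this
      exact sub_eq_zero.1 this
    have t2 : Tendsto (fun u => φ (u * u)) l (nhds (φ e)) := by
      have h1 : Tendsto (fun u => e * u * u) l (nhds e) := by
        have h2 : Tendsto (fun u => (e * u - e) * u) l (nhds 0) := by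
          have h3 : Tendsto (fun u => ‖e * u - e‖) l (nhds 0) := by
            have := ((hl.tendsto_mul_left e).sub_const e).norm
            simpa using this
          refine squeeze_zero_norm' ?_ h3
          filter_upwards [hl.eventually_norm] with u hu1
          refine (norm_mul_le _ _).trans ?_
          nlinarith [norm_nonneg (e * u - e)]
        have := h2.add (hl.tendsto_mul_left e)
        simpa [sub_mul] using this
      have := (φ.continuous.tendsto _).comp h1
      refine this.congr fun u => ?_
      simp [mul_assoc, heb]
    have hr1 : ‖φ e‖ ≤ 1 := by
      refine le_of_tendsto t2.norm ?_
      filter_upwards [hl.eventually_norm] with u hu1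
      refine (hle _).trans ((norm_mul_le _ _).trans ?_)
      nlinarith [norm_nonneg u]
    have hk : ∀ (b : C) (z : ℂ),
        0 ≤ ‖z‖ ^ 2 * (φ e).re + 2 * (star z * φ b).re + (φ (star b * b)).re := by
      intro b z
      have ht : Tendsto (fun u => ‖z‖ ^ 2 * (φ (u * u)).re + 2 * (star z * φ (u * b)).re
          + (φ (star b * b)).re) l
          (nhds (‖z‖ ^ 2 * (φ e).re + 2 * (star z * φ b).re + (φ (star b * b)).re)) :=
        ((((Complex.continuous_re.tendsto _).comp t2).const_mul _).add
          (((Complex.continuous_re.tendsto _).comp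
            ((tl b).const_mul (star z))).const_mul 2)).add_const _
      refine ge_of_tendsto ht ?_
      filter_upwards [hl.eventually_star_eq] with u hu
      exact key u b z hu
    have hre : 1 ≤ (φ e).re := by
      by_contra! hlt
      have hb : ∀ b, ‖φ b‖ ≤ (√(2 - (φ e).re))⁻¹ * ‖b‖ := by
        intro b
        have h0 := hk b (- φ b)
        have h1 : (φ (star b * b)).re ≤ ‖b‖ ^ 2 := by
          refine (Complex.re_le_norm _).trans ((hle _).trans ?_)
          rw [CStarRing.norm_star_mul_self, sq]
        have h2 : (star (- φ b) * φ b).re = - ‖φ b‖ ^ 2 := by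
          rw [← Complex.normSq_eq_norm_sq, Complex.normSq_apply]
          simp
        rw [h2, norm_neg] at h0
        have hs : 0 < √(2 - (φ e).re) := Real.sqrt_pos.2 (by linarith)
        rw [inv_mul_eq_div, le_div_iff₀ hs]
        refine abs_le_of_sq_le_sq' ?_ (norm_nonneg b) |>.2
        rw [mul_pow, Real.sq_sqrt (by linarith)]
        linarith
      have h3 := φ.opNorm_le_bound (by positivity) hb
      rw [hn] at h3
      have h4 : 1 < √(2 - (φ e).re) := by
        rw [Real.lt_sqrt] <;> linarith
      have := inv_lt_one_of_one_lt₀ h4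
      linarith
    have h5 : (φ e).re = 1 := le_antisymm ((Complex.re_le_norm _).trans hr1) hre
    have h6 : (φ e).im = 0 := by
      have : ‖φ e‖ ^ 2 ≤ 1 := by nlinarith [norm_nonneg (φ e)]
      rw [← Complex.normSq_eq_norm_sq, Complex.normSq_apply, h5] at this
      nlinarith
    exact Complex.ext (by simpa using h5) (by simpa using h6)

theorem aux_bound {C : Type*} [NonUnitalCStarAlgebra C] (φ : C →L[ℂ] ℂ)
    (hφ : IsState φ) (π : C →⋆ₙₐ[ℂ] (H →L[ℂ] H))
    (hvanish : ∀ a : C, IsCompactOperator (π a) → φ a = 0) (a : C) (t : ℝ) (s : Finset H)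
    (h : ∀ ξ, (∀ x ∈ s, ⟪x, ξ⟫ = 0) → (⟪ξ, π a ξ⟫).re ≤ t * ‖ξ‖ ^ 2) : (φ a).re ≤ t := by
  obtain ⟨h1, h2, h3⟩ := aux_conv φ hφ π hvanish
  let ψ : Unitization ℂ C →ₗ[ℂ] ℂ :=
    { toFun := fun x => x.fst + φ x.snd
      map_add' := fun x y => by simp; ring
      map_smul' := fun c x => by simp; ring }
  have hψ : ∀ x, ψ x = x.fst + φ x.snd := fun x => rfl
  have hρ : ∀ x, Unitization.starLift π x = x.fst • (1 : H →L[ℂ] H) + π x.snd := by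
    intro x
    simp [Unitization.starLift, Unitization.lift, Algebra.algebraMap_eq_smul_one]
  have := aux_unital (Unitization.starLift π) ψ (by simp [hψ]) ?_ ?_ ?_ (a : Unitization ℂ C) t s
    (fun ξ hξ => by rw [hρ]; simpa using h ξ hξ)
  · simpa [hψ] using this
  · intro b
    have := h2 b.snd b.fst
    rw [← Complex.normSq_eq_norm_sq, Complex.normSq_apply] at this
    simp [hψ, h1] at this ⊢
    linarith
  · intro b
    simp [hψ, h1]
  · intro b hb
    rw [hρ] at hb
    rw [hψ]
    by_cases h0 : b.fst = 0
    · rw [h0] at hb ⊢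
      rw [hvanish b.snd (by simpa using hb)]; simp
    · have := h3 ((-b.fst⁻¹) • b.snd) (by
        have h4 := hb.smul (-b.fst⁻¹)
        have e0 : ((π ((-b.fst⁻¹) • b.snd) - 1 : H →L[ℂ] H) : H → H) =
            (-b.fst⁻¹) • ⇑(b.fst • (1 : H →L[ℂ] H) + π b.snd) := by
          funext x
          simp [h0, smul_smul]
          abel
        rw [e0]
        exact h4)
      simp at this
      field_simp at this
      rw [← this]; ring

theorem aux_approx {C : Type*} [NonUnitalCStarAlgebra C] (φ : C →L[ℂ] ℂ)
    (hφ : IsState φ) (π : C →⋆ₙₐ[ℂ] (H →L[ℂ] H))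
    (hvanish : ∀ a : C, IsCompactOperator (π a) → φ a = 0)
    {n : ℕ} (a : Fin n → C) (s : Finset H) (ε : ℝ) (hε : 0 < ε) :
    ∃ ξ : H, ‖ξ‖ = 1 ∧ (∀ x ∈ s, ⟪x, ξ⟫ = 0) ∧ ∀ i, ‖⟪ξ, π (a i) ξ⟫ - φ (a i)‖ < ε := by
  classical
  let v : H → Fin n → ℂ := fun ξ i => ⟪ξ, π (a i) ξ⟫
  let W : Finset H → Set (Fin n → ℂ) := fun s =>
    v '' {ξ | ‖ξ‖ = 1 ∧ ∀ x ∈ s, ⟪x, ξ⟫ = 0}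
  have hWanti : ∀ s t, s ⊆ t → W t ⊆ W s := by
    rintro s t hst _ ⟨ξ, ⟨h1, h2⟩, rfl⟩
    exact ⟨ξ, ⟨h1, fun x hx => h2 x (hst hx)⟩, rfl⟩
  have hmem : (fun i => φ (a i)) ∈ ⋂ s, closure (W s) := by
    by_contra hnot
    have hconv : Convex ℝ (⋂ s, closure (W s)) := by
      intro x hx y hy α β hα hβ hαβ
      rw [Set.mem_iInter] at hx hy ⊢
      intro s
      rw [Metric.mem_closure_iff]
      intro ε hε
      obtain ⟨_, ⟨ξ, ⟨hξ1, hξ2⟩, rfl⟩, hξ⟩ := Metric.mem_closure_iff.1 (hx s) ε hε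
      obtain ⟨_, ⟨η, ⟨hη1, hη2⟩, rfl⟩, hη⟩ := Metric.mem_closure_iff.1
        (hy (s ∪ {ξ} ∪ Finset.univ.image (fun i => π (a i) ξ) ∪
          Finset.univ.image (fun i => π (star (a i)) ξ))) ε hε
      have o1 : ⟪ξ, η⟫ = 0 := hη2 _ (by simp)
      have o1' : ⟪η, ξ⟫ = 0 := inner_eq_zero_symm.1 o1
      have o2 : ∀ i, ⟪π (a i) ξ, η⟫ = 0 := fun i => hη2 _ (by simp)
      have o2' : ∀ i, ⟪η, π (a i) ξ⟫ = 0 := fun i => inner_eq_zero_symm.1 (o2 i)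
      have o3 : ∀ i, ⟪ξ, π (a i) η⟫ = 0 := fun i => by
        have := hη2 (π (star (a i)) ξ) (by simp)
        rwa [map_star, ContinuousLinearMap.star_eq_adjoint,
          ContinuousLinearMap.adjoint_inner_left] at this
      have o4 : ∀ z ∈ s, ⟪z, η⟫ = 0 := fun z hz => hη2 _ (by simp [hz])
      have sα : ((√α : ℝ) : ℂ) * ((√α : ℝ) : ℂ) = α := by
        rw [← Complex.ofReal_mul, Real.mul_self_sqrt hα]
      have sβ : ((√β : ℝ) : ℂ) * ((√β : ℝ) : ℂ) = β := by
        rw [← Complex.ofReal_mul, Real.mul_self_sqrt hβ]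
      let ζ : H := ((√α : ℝ) : ℂ) • ξ + ((√β : ℝ) : ℂ) • η
      have hvζ : v ζ = α • v ξ + β • v η := by
        ext i
        simp only [v, ζ, map_add, map_smul, inner_add_left, inner_add_right, inner_smul_left,
          inner_smul_right, o2', o3, Complex.conj_ofReal, Pi.add_apply, Pi.smul_apply,
          Complex.real_smul, ← sα, ← sβ]
        ring
      have hζ : ‖ζ‖ = 1 := by
        have : ⟪ζ, ζ⟫ = 1 := by
          have n1 : ⟪ξ, ξ⟫ = 1 := by rw [inner_self_eq_norm_sq_to_K, hξ1]; simp
          have n2 : ⟪η, η⟫ = 1 := by rw [inner_self_eq_norm_sq_to_K, hη1]; simp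
          simp only [ζ, inner_add_left, inner_add_right, inner_smul_left,
            inner_smul_right, o1, o1', Complex.conj_ofReal, n1, n2]
          have : ((α + β : ℝ) : ℂ) = 1 := by rw [hαβ]; simp
          rw [Complex.ofReal_add, ← sα, ← sβ] at this
          linear_combination this
        rw [inner_self_eq_norm_sq_to_K] at this
        have h' : ‖ζ‖ ^ 2 = 1 := by
          have h'' : ((‖ζ‖ ^ 2 : ℝ) : ℂ) = ((1 : ℝ) : ℂ) := by
            rw [Complex.ofReal_one, ← this]; norm_cast
          exact Complex.ofReal_injective h''
        have := norm_nonneg ζ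
        nlinarith
      refine ⟨v ζ, ⟨ζ, ⟨hζ, fun z hz => ?_⟩, rfl⟩, ?_⟩
      · simp [ζ, inner_add_right, inner_smul_right, hξ2 z hz, o4 z hz]
      · rw [hvζ]
        have hb := (convex_ball (0 : Fin n → ℂ) ε) (x := x - v ξ) (by simpa [dist_eq_norm] using hξ)
          (y := y - v η) (by simpa [dist_eq_norm] using hη) hα hβ hαβ
        rw [mem_ball_zero_iff] at hb
        rw [dist_eq_norm]
        have e0 : α • x + β • y - (α • v ξ + β • v η) = α • (x - v ξ) + β • (y - v η) := by
          module
        rw [e0]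
        exact hb
    have hcl : IsClosed (⋂ s, closure (W s)) := isClosed_iInter fun _ => isClosed_closure
    obtain ⟨f, u, hu1, hu2⟩ := RCLike.geometric_hahn_banach_point_closed (𝕜 := ℂ) hconv hcl hnot
    let b : C := ∑ i, f (Pi.single i 1) • a i
    have hf : ∀ w : Fin n → ℂ, f w = ∑ i, f (Pi.single i 1) * w i := by
      intro w
      have := LinearMap.pi_apply_eq_sum_univ f.toLinearMap w
      simp only [ContinuousLinearMap.coe_coe, smul_eq_mul] at this
      rw [this]
      refine Finset.sum_congr rfl fun i _ => ?_
      rw [mul_comm]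
      congr 2
      ext j
      simp [Pi.single_apply, eq_comm]
    have hfφ : f (fun i => φ (a i)) = φ b := by
      rw [hf]; simp [b]
    have hfv : ∀ ξ, f (v ξ) = ⟪ξ, π b ξ⟫ := by
      intro ξ
      rw [hf]; simp [b, v, inner_sum, inner_smul_right]
    have hex : ∃ s : Finset H, ∀ ξ, ‖ξ‖ = 1 → (∀ x ∈ s, ⟪x, ξ⟫ = 0) →
        u < (⟪ξ, π b ξ⟫).re := by
      by_contra! hcon
      let K : Finset H → Set (Fin n → ℂ) := fun s => closure (W s ∩ {w | (f w).re ≤ u})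
      have hbdd : ∀ s, Bornology.IsBounded (W s) := by
        intro s
        rw [isBounded_iff_forall_norm_le]
        refine ⟨∑ i, ‖π (a i)‖, ?_⟩
        rintro _ ⟨ξ, ⟨hξ, -⟩, rfl⟩
        rw [pi_norm_le_iff_of_nonneg (by positivity)]
        intro i
        have h1 : ‖v ξ i‖ ≤ ‖π (a i)‖ := by
          refine (norm_inner_le_norm _ _).trans ?_
          have := (π (a i)).le_opNorm ξ
          rw [hξ] at this ⊢
          linarith
        exact h1.trans (Finset.single_le_sum (f := fun i => ‖π (a i)‖)
          (fun _ _ => norm_nonneg _) (Finset.mem_univ i))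
      obtain ⟨w, hw⟩ := IsCompact.nonempty_iInter_of_directed_nonempty_isCompact_isClosed K
        (fun s t => ⟨s ∪ t,
          closure_mono (Set.inter_subset_inter_left _ (hWanti _ _ Finset.subset_union_left)),
          closure_mono (Set.inter_subset_inter_left _ (hWanti _ _ Finset.subset_union_right))⟩)
        (fun s => by
          obtain ⟨ξ, h1, h2, h3⟩ := hcon s
          exact ⟨v ξ, subset_closure ⟨⟨ξ, ⟨h1, h2⟩, rfl⟩, by simpa [hfv] using h3⟩⟩)
        (fun s => ((hbdd s).subset Set.inter_subset_left).isCompact_closure)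
        (fun s => isClosed_closure)
      rw [Set.mem_iInter] at hw
      have h1 : w ∈ ⋂ s, closure (W s) :=
        Set.mem_iInter.2 fun s => closure_mono Set.inter_subset_left (hw s)
      have h2 : (f w).re ≤ u := by
        have hc : IsClosed {w | (f w).re ≤ u} :=
          isClosed_le (Complex.continuous_re.comp f.continuous) continuous_const
        exact closure_minimal Set.inter_subset_right hc (hw ∅)
      have h3 := hu2 w h1
      simp only [RCLike.re_eq_complex_re] at h3
      linarith
    obtain ⟨s, hs⟩ := hex
    have hfin := aux_bound φ hφ π hvanish (-b) (-u) s (by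
      intro ξ hξ
      by_cases h0 : ξ = 0
      · simp [h0]
      have hne : ‖ξ‖ ≠ 0 := norm_ne_zero_iff.2 h0
      have := hs (((‖ξ‖⁻¹ : ℝ) : ℂ) • ξ) (by simp [norm_smul, hne])
        (fun x hx => by simp [inner_smul_right, hξ x hx])
      rw [map_smul, inner_smul_left, inner_smul_right, Complex.conj_ofReal,
        Complex.re_ofReal_mul, Complex.re_ofReal_mul] at this
      have hp : 0 < ‖ξ‖ := norm_pos_iff.2 h0
      have h5 : u * ‖ξ‖ ^ 2 ≤ (⟪ξ, π b ξ⟫).re := by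
        have := mul_le_mul_of_nonneg_right this.le (sq_nonneg ‖ξ‖)
        field_simp at this
        linarith
      simp
      linarith)
    rw [hfφ] at hu1
    simp only [RCLike.re_eq_complex_re] at hu1
    simp at hfin
    linarith
  obtain ⟨_, ⟨ξ, ⟨h1, h2⟩, rfl⟩, h3⟩ := Metric.mem_closure_iff.1 (Set.mem_iInter.1 hmem s) ε hε
  refine ⟨ξ, h1, h2, fun i => ?_⟩
  rw [← dist_eq_norm, dist_comm]
  exact (dist_le_pi_dist _ _ i).trans_lt h3

theorem aux_main {C : Type*} [NonUnitalCStarAlgebra C] [TopologicalSpace.SeparableSpace C]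
    (φ : C →L[ℂ] ℂ)
    (hφ : IsState φ) (π : C →⋆ₙₐ[ℂ] (H →L[ℂ] H))
    (hvanish : ∀ a : C, IsCompactOperator (π a) → φ a = 0) :
    ∃ ξ : ℕ → H, Orthonormal ℂ ξ ∧
      ∀ a : C, Tendsto (fun n => ⟪ξ n, π a (ξ n)⟫) atTop (nhds (φ a)) := by
  classical
  let d := TopologicalSpace.denseSeq C
  have hd := TopologicalSpace.denseRange_denseSeq C
  obtain ⟨g, hg1, hg2⟩ := exists_seq_of_forall_finset_exists (α := ℕ × H)
    (fun p => ‖p.2‖ = 1 ∧ ∀ i < p.1, ‖⟪p.2, π (d i) p.2⟫ - φ (d i)‖ < 1 / ((p.1 : ℝ) + 1))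
    (fun p q => p.1 < q.1 ∧ ⟪p.2, q.2⟫ = 0) (by
      intro s _
      let k := s.sup Prod.fst + 1
      obtain ⟨ξ, h1, h2, h3⟩ := aux_approx φ hφ π hvanish (fun i : Fin k => d i)
        (s.image Prod.snd) (1 / ((k : ℝ) + 1)) (by positivity)
      refine ⟨(k, ξ), ⟨h1, fun i hi => h3 ⟨i, hi⟩⟩, fun p hp => ⟨?_, ?_⟩⟩
      · exact Nat.lt_succ_of_le (Finset.le_sup (f := Prod.fst) hp)
      · exact h2 _ (Finset.mem_image_of_mem _ hp))
  have hmono : StrictMono fun n => (g n).1 := fun m n h => (hg2 m n h).1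
  have hge : ∀ n, n ≤ (g n).1 := hmono.id_le
  refine ⟨fun n => (g n).2, ⟨fun n => (hg1 n).1, ?_⟩, ?_⟩
  · intro m n hmn
    rcases lt_or_gt_of_ne hmn with h | h
    · exact (hg2 m n h).2
    · exact inner_eq_zero_symm.1 (hg2 n m h).2
  · intro a
    rw [Metric.tendsto_atTop]
    intro ε hε
    obtain ⟨i, hi⟩ := hd.exists_dist_lt a (ε := ε / 3) (by positivity)
    obtain ⟨N, hN⟩ := exists_nat_one_div_lt (show 0 < ε / 3 by positivity)
    refine ⟨max (i + 1) N, fun n hn => ?_⟩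
    obtain ⟨h1, h2⟩ := hg1 n
    have hn1 : i < (g n).1 := lt_of_lt_of_le (by omega) (hge n)
    have hn2 : N ≤ (g n).1 := le_trans (by omega) (hge n)
    have h3 := h2 i hn1
    have h4 : 1 / (((g n).1 : ℝ) + 1) ≤ 1 / ((N : ℝ) + 1) := by gcongr
    set ξ := (g n).2
    rw [dist_eq_norm] at hi ⊢
    have h5 : ‖⟪ξ, π (a - d i) ξ⟫‖ ≤ ‖a - d i‖ := by
      refine (norm_inner_le_norm _ _).trans ?_
      have e1 := (π (a - d i)).le_opNorm ξ
      have e2 := NonUnitalStarAlgHom.norm_apply_le π (a - d i)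
      rw [h1] at e1 ⊢
      linarith
    have h6 : ‖φ (a - d i)‖ ≤ ‖a - d i‖ := by simpa [hφ.1] using φ.le_opNorm (a - d i)
    have e : ⟪ξ, π a ξ⟫ - φ a = ⟪ξ, π (a - d i) ξ⟫ + (⟪ξ, π (d i) ξ⟫ - φ (d i))
        - φ (a - d i) := by
      simp [inner_sub_right]
    rw [e]
    refine (norm_sub_le _ _).trans_lt ?_
    have := norm_add_le (⟪ξ, π (a - d i) ξ⟫) (⟪ξ, π (d i) ξ⟫ - φ (d i))
    linarith

end Helpers

/-- Anderson's theorem: if `A` is a separable C*-algebra, `π` an irreducible representation of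
`A` on `H_π`, and `φ` a state of `A` vanishing on `π⁻¹(K(H_π))` with `ker π ⊆ ker π_φ`, then
there is an orthonormal sequence `(ξ_n)` in `H_π` whose vector states `⟨π(·)ξ_n, ξ_n⟩`
converge weak* to `φ`. -/
theorem anderson_orthonormal_vector_states
    (A : Type*) [NonUnitalCStarAlgebra A] [StarModule ℂ A]
    [TopologicalSpace.SeparableSpace A]
    {H : Type*} [NormedAddCommGroup H] [InnerProductSpace ℂ H] [CompleteSpace H]
    (π : A →⋆ₙₐ[ℂ] (H →L[ℂ] H)) (hπ : IsIrreducibleRep π)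
    (φ : A →L[ℂ] ℂ) (hφ : IsState φ)
    (hvanish : ∀ a : A, IsCompactOperator (π a) → φ a = 0)
    (hker : ∀ a : A, π a = 0 →
      φ (star a * a) = 0 ∧ ∀ b : A, φ (star b * (star a * a * b)) = 0) :
    ∃ ξ : ℕ → H, Orthonormal ℂ ξ ∧
      ∀ a : A, Tendsto (fun n => ⟪ξ n, π a (ξ n)⟫) atTop (nhds (φ a)) := by
  exact aux_main φ hφ π hvanish
end

section
/- (Alspach) The space L¹([0,1]) does not have the weak fixed point property: there exists a nonempty convex weakly compact subset K of L¹([0,1]) and a non-expansive (indeed isometric) map T : K → K with no fixed point. -/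
open MeasureTheory Set

noncomputable def alspD (t : ℝ) : ℝ := if t ≤ 1/2 then 2 * t else 2 * t - 1

local notation "μ₁" => (Measure.restrict (volume : Measure ℝ) (Icc (0:ℝ) 1))

lemma alspD_meas : Measurable alspD := by
  unfold alspD
  exact Measurable.ite measurableSet_Iic (by fun_prop) (by fun_prop)

lemma alsp_mu_eq : μ₁ = (volume : Measure ℝ).restrict (Ioc (0:ℝ) 1) :=
  Measure.restrict_congr_set Ioc_ae_eq_Icc.symm

lemma alsp_ergodic : Ergodic alspD μ₁ := by
  have hT : Fact ((0:ℝ) < 1) := ⟨one_pos⟩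
  let g : AddCircle (1:ℝ) → ℝ := fun x => (AddCircle.equivIoc (1:ℝ) 0 x : ℝ)
  have hgm : Measurable g := measurable_subtype_coe.comp (AddCircle.measurableEquivIoc (1:ℝ) 0).measurable
  have hgmk : ∀ t ∈ Ioc (0:ℝ) 1, g (t : AddCircle (1:ℝ)) = t := by
    intro t ht
    have := AddCircle.equivIoc_coe_eq (p := (1:ℝ)) (a := 0) (x := t) (by simpa using ht)
    simp only [g]
    rw [this]
  have hmem : ∀ x, g x ∈ Ioc (0:ℝ) 1 := fun x => by
    have := (AddCircle.equivIoc (1:ℝ) 0 x).2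
    simpa using this
  have hmkg : ∀ x, ((g x : ℝ) : AddCircle (1:ℝ)) = x := fun x =>
    (AddCircle.equivIoc (1:ℝ) 0).symm_apply_apply x
  have hg : MeasurePreserving g volume μ₁ := by
    refine ⟨hgm, ?_⟩
    have h := AddCircle.measurePreserving_mk (1:ℝ) 0
    rw [zero_add] at h
    rw [alsp_mu_eq, ← h.map_eq, Measure.map_map hgm h.measurable]
    conv_rhs => rw [← Measure.map_id (μ := (volume : Measure ℝ).restrict (Ioc (0:ℝ) 1))]
    apply Measure.map_congr
    filter_upwards [ae_restrict_mem measurableSet_Ioc] with t ht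
    exact hgmk t ht
  refine hg.ergodic_of_ergodic_semiconj (AddCircle.ergodic_nsmul (T := (1:ℝ)) (n := 2) (by norm_num)) alspD_meas ?_
  intro x
  have hx := hmem x
  have hD : alspD (g x) ∈ Ioc (0:ℝ) 1 := by
    unfold alspD
    split_ifs with h <;> constructor <;> linarith [hx.1, hx.2]
  change g (2 • x) = alspD (g x)
  rw [← hgmk _ hD]
  congr 1
  conv_lhs => rw [← hmkg x]
  unfold alspD
  split_ifs with h
  · rw [two_nsmul, two_mul, AddCircle.coe_add]
  · rw [two_nsmul, two_mul, AddCircle.coe_sub, AddCircle.coe_add, AddCircle.coe_period, sub_zero]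

lemma alsp_int (H0 H1 : ℝ → ℝ) (h0 : Integrable H0 μ₁) (h1 : Integrable H1 μ₁) :
    ∫ t, (if t ≤ 1/2 then H0 (alspD t) else H1 (alspD t)) ∂μ₁
      = (1/2) * ∫ t, (H0 t + H1 t) ∂μ₁ := by
  rw [integral_add h0 h1]
  rw [alsp_mu_eq] at h0 h1 ⊢
  have i0 : IntervalIntegrable H0 volume 0 1 :=
    (intervalIntegrable_iff_integrableOn_Ioc_of_le zero_le_one).2 h0
  have i1 : IntervalIntegrable H1 volume 0 1 :=
    (intervalIntegrable_iff_integrableOn_Ioc_of_le zero_le_one).2 h1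
  simp only [← intervalIntegral.integral_of_le (zero_le_one (α := ℝ))]
  have j0 : IntervalIntegrable (fun t => H0 (2 * t)) volume 0 (1/2) := by
    simpa using i0.comp_mul_left (c := 2)
  have j1 : IntervalIntegrable (fun t => H1 (2 * t - 1)) volume (1/2) 1 := by
    have := (i1.comp_sub_right 1).comp_mul_left (c := 2)
    norm_num at this ⊢
    exact this
  have e0 : EqOn (fun t => if t ≤ 1/2 then H0 (alspD t) else H1 (alspD t)) (fun t => H0 (2 * t)) (Ioc 0 (1/2)) := by
    intro t ht
    simp only [alspD, if_pos ht.2]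
  have e1 : EqOn (fun t => if t ≤ 1/2 then H0 (alspD t) else H1 (alspD t)) (fun t => H1 (2 * t - 1)) (Ioc (1/2) 1) := by
    intro t ht
    simp only [alspD, if_neg (not_le.2 ht.1)]
  rw [← uIoc_of_le (by norm_num)] at e0 e1
  rw [← intervalIntegral.integral_add_adjacent_intervals (b := 1/2) (j0.congr e0.symm) (j1.congr e1.symm),
    intervalIntegral.integral_congr_ae (Filter.Eventually.of_forall fun t ht => e0 ht),
    intervalIntegral.integral_congr_ae (Filter.Eventually.of_forall fun t ht => e1 ht),
    intervalIntegral.integral_comp_mul_left _ (by norm_num),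
    intervalIntegral.integral_comp_mul_sub _ (by norm_num)]
  norm_num
  ring

instance alsp_prob : IsProbabilityMeasure μ₁ := ⟨by simp⟩

noncomputable def alspIncl : Lp ℝ 2 μ₁ →L[ℝ] Lp ℝ 1 μ₁ :=
  LinearMap.mkContinuous
    { toFun := fun f => ((Lp.memLp f).mono_exponent (q := 2) (p := 1) (by norm_num)).toLp f
      map_add' := fun f g => by
        rw [← MemLp.toLp_add]
        exact MemLp.toLp_congr _ _ (Lp.coeFn_add f g)
      map_smul' := fun c f => by
        rw [RingHom.id_apply, ← MemLp.toLp_const_smul]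
        exact MemLp.toLp_congr _ _ (Lp.coeFn_smul c f) } 1
    (fun f => by
      rw [one_mul]
      change ‖MemLp.toLp f ((Lp.memLp f).mono_exponent (q := 2) (p := 1) (by norm_num))‖ ≤ _
      rw [Lp.norm_toLp, Lp.norm_def]
      exact ENNReal.toReal_mono (Lp.eLpNorm_ne_top f)
        (eLpNorm_le_eLpNorm_of_exponent_le (by norm_num) (Lp.aestronglyMeasurable f)))

def alspK : Set (Lp ℝ 1 μ₁) := {f | (∀ᵐ t ∂μ₁, 0 ≤ f t ∧ f t ≤ 2) ∧ ∫ t, f t ∂μ₁ = 1}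

lemma alspK_eq : alspK = Icc 0 (Lp.const 1 μ₁ (2:ℝ)) ∩ {f | ∫ t, f t ∂μ₁ = 1} := by
  ext f
  simp only [alspK, mem_inter_iff, mem_Icc, mem_ofPred_eq, and_congr_left_iff]
  intro _
  rw [← Lp.coeFn_nonneg, ← Lp.coeFn_le]
  have := Lp.coeFn_const (p := 1) (μ := μ₁) (2:ℝ)
  constructor
  · intro h
    constructor
    · filter_upwards [h] with t ht using ht.1
    · filter_upwards [h, this] with t ht h2
      rw [h2]; exact ht.2
  · rintro ⟨h1, h2⟩
    filter_upwards [h1, h2, this] with t h1 h2 h3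
    rw [h3] at h2
    exact ⟨h1, h2⟩

lemma alspK_closed : IsClosed alspK := by
  rw [alspK_eq]
  exact isClosed_Icc.inter (isClosed_eq continuous_integral continuous_const)

lemma alspK_convex : Convex ℝ alspK := by
  intro f hf g hg a b ha hb hab
  have h1 := Lp.coeFn_add (a • f) (b • g)
  have h2 := Lp.coeFn_smul a f
  have h3 := Lp.coeFn_smul b g
  have h : ∀ᵐ t ∂μ₁, (a • f + b • g : Lp ℝ 1 μ₁) t = a * f t + b * g t := by
    filter_upwards [h1, h2, h3] with t h1 h2 h3
    rw [h1, Pi.add_apply, h2, h3]; rfl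
  constructor
  · filter_upwards [h, hf.1, hg.1] with t h hf hg
    rw [h]
    constructor
    · have := mul_nonneg ha hf.1
      have := mul_nonneg hb hg.1
      linarith
    · nlinarith [mul_le_mul_of_nonneg_left hf.2 ha, mul_le_mul_of_nonneg_left hg.2 hb]
  · rw [integral_congr_ae h, integral_add ((L1.integrable_coeFn f).const_mul a) ((L1.integrable_coeFn g).const_mul b), integral_const_mul,
      integral_const_mul, hf.2, hg.2]
    linarith

lemma alspK_nonempty : alspK.Nonempty := by
  refine ⟨Lp.const 1 μ₁ (1:ℝ), ?_, ?_⟩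
  · filter_upwards [Lp.coeFn_const (p := 1) (μ := μ₁) (1:ℝ)] with t ht
    rw [ht]; norm_num
  · rw [integral_congr_ae (Lp.coeFn_const (p := 1) (μ := μ₁) (1:ℝ))]
    simp

lemma alspK_compact : IsCompact (toWeakSpace ℝ (Lp ℝ 1 μ₁) '' alspK) := by
  let H := Lp ℝ 2 μ₁
  let Φ : WeakDual ℝ H → WeakSpace ℝ (Lp ℝ 1 μ₁) := fun φ =>
    toWeakSpace ℝ (Lp ℝ 1 μ₁) (alspIncl ((InnerProductSpace.toDual ℝ H).symm (WeakDual.toStrongDual φ)))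
  have hΦ : Continuous Φ := by
    apply WeakBilin.continuous_of_continuous_eval
    intro ψ
    let v : H := (InnerProductSpace.toDual ℝ H).symm (ψ.comp alspIncl)
    have : ∀ φ : WeakDual ℝ H, φ v = ψ (alspIncl ((InnerProductSpace.toDual ℝ H).symm (WeakDual.toStrongDual φ))) := by
      intro φ
      have e1 : ∀ x, inner ℝ v x = ψ (alspIncl x) := fun x => by
        simp [v, InnerProductSpace.toDual_symm_apply]
      rw [← e1, real_inner_comm, InnerProductSpace.toDual_symm_apply]
      rfl
    exact (WeakDual.eval_continuous v).congr this
  have hc := (WeakDual.isCompact_closedBall (𝕜 := ℝ) (E := H) 0 2).image hΦ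
  have hcl : IsClosed (toWeakSpace ℝ (Lp ℝ 1 μ₁) '' alspK) := by
    have := alspK_convex.toWeakSpace_closure ℝ
    rw [alspK_closed.closure_eq] at this
    rw [this]; exact isClosed_closure
  refine hc.of_isClosed_subset hcl ?_
  rintro _ ⟨f, hf, rfl⟩
  have hb : ∀ᵐ t ∂μ₁, ‖f t‖ ≤ 2 := by
    filter_upwards [hf.1] with t ht
    rw [Real.norm_eq_abs, abs_of_nonneg ht.1]; exact ht.2
  have hm : MemLp f 2 μ₁ := MemLp.of_bound (Lp.aestronglyMeasurable f) 2 hb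
  refine ⟨StrongDual.toWeakDual (InnerProductSpace.toDual ℝ H (hm.toLp f)), ?_, ?_⟩
  · simp only [mem_preimage, Metric.mem_closedBall, dist_zero_right]
    rw [StrongDual.toStrongDual_toWeakDual, LinearIsometryEquiv.norm_map, Lp.norm_toLp]
    have := eLpNorm_le_of_ae_bound (p := 2) hb
    simp at this
    exact ENNReal.toReal_le_of_le_ofReal (by norm_num) (by simpa using this)
  · simp only [Φ, StrongDual.toStrongDual_toWeakDual, LinearIsometryEquiv.symm_apply_apply]
    congr 1
    change MemLp.toLp (hm.toLp f) ((Lp.memLp (hm.toLp f)).mono_exponent (q := 2) (p := 1) (by norm_num)) = _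
    conv_rhs => rw [← Lp.toLp_coeFn f (Lp.memLp f)]
    exact MemLp.toLp_congr _ _ hm.coeFn_toLp

noncomputable def alspTfun (f : ℝ → ℝ) (t : ℝ) : ℝ :=
  if t ≤ 1/2 then min (2 * f (alspD t)) 2 else max (2 * f (alspD t) - 2) 0

lemma alspTfun_int {f : ℝ → ℝ} (hf : Integrable f μ₁) : Integrable (alspTfun f) μ₁ := by
  have h : Integrable (fun t => f (alspD t)) μ₁ :=
    alsp_ergodic.toMeasurePreserving.integrable_comp_of_integrable hf
  have h1 : Integrable (fun t => min (2 * f (alspD t)) 2) μ₁ :=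
    (h.const_mul 2).inf (integrable_const 2)
  have h2 : Integrable (fun t => max (2 * f (alspD t) - 2) 0) μ₁ :=
    ((h.const_mul 2).sub (integrable_const 2)).sup (integrable_const 0)
  have := Integrable.piecewise (s := Iic (1/2)) measurableSet_Iic h1.integrableOn h2.integrableOn
  refine this.congr (Filter.Eventually.of_forall fun t => ?_)
  simp [alspTfun, Set.piecewise]

noncomputable def alspT (f : Lp ℝ 1 μ₁) : Lp ℝ 1 μ₁ :=
  (alspTfun_int (L1.integrable_coeFn f)).toL1 _

lemma alspT_coe (f : Lp ℝ 1 μ₁) : alspT f =ᵐ[μ₁] alspTfun f :=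
  Integrable.coeFn_toL1 _

lemma alspT_iso (f g : Lp ℝ 1 μ₁) : ‖alspT f - alspT g‖ = ‖f - g‖ := by
  have hf := L1.integrable_coeFn f
  have hg := L1.integrable_coeFn g
  rw [L1.norm_eq_integral_norm, L1.norm_eq_integral_norm]
  have e1 : (fun t => ‖(alspT f - alspT g : Lp ℝ 1 μ₁) t‖) =ᵐ[μ₁] fun t =>
      if t ≤ 1/2 then (fun s => |min (2 * f s) 2 - min (2 * g s) 2|) (alspD t)
      else (fun s => |max (2 * f s - 2) 0 - max (2 * g s - 2) 0|) (alspD t) := by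
    filter_upwards [Lp.coeFn_sub (alspT f) (alspT g), alspT_coe f, alspT_coe g] with t h1 h2 h3
    rw [h1, Pi.sub_apply, h2, h3, Real.norm_eq_abs]
    unfold alspTfun
    split_ifs <;> rfl
  have e2 : (fun t => ‖(f - g : Lp ℝ 1 μ₁) t‖) =ᵐ[μ₁] fun t => |f t - g t| := by
    filter_upwards [Lp.coeFn_sub f g] with t h1
    rw [h1, Pi.sub_apply, Real.norm_eq_abs]
  rw [integral_congr_ae e1, integral_congr_ae e2, alsp_int (fun s => |min (2 * f s) 2 - min (2 * g s) 2|)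
    (fun s => |max (2 * f s - 2) 0 - max (2 * g s - 2) 0|), ← integral_const_mul]
  · congr 1
    ext t
    rcases le_total (f t) 1 with h | h <;> rcases le_total (g t) 1 with h' | h'
    · rw [min_eq_left (by linarith), min_eq_left (by linarith), max_eq_right (by linarith),
        max_eq_right (by linarith), ← mul_sub, abs_mul]
      norm_num
      ring
    · rw [min_eq_left (by linarith), min_eq_right (by linarith), max_eq_right (by linarith),
        max_eq_left (by linarith), abs_of_nonpos (by linarith), abs_of_nonpos (by linarith),
        abs_of_nonpos (by linarith)]
      ring
    · rw [min_eq_right (by linarith), min_eq_left (by linarith), max_eq_left (by linarith),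
        max_eq_right (by linarith), abs_of_nonneg (by linarith), abs_of_nonneg (by linarith),
        abs_of_nonneg (by linarith)]
      ring
    · rw [min_eq_right (by linarith), min_eq_right (by linarith), max_eq_left (by linarith),
        max_eq_left (by linarith), sub_sub_sub_cancel_right, ← mul_sub, abs_mul]
      norm_num
      ring
  · exact (((hf.const_mul 2).inf (integrable_const 2)).sub
      ((hg.const_mul 2).inf (integrable_const 2))).abs
  · exact ((((hf.const_mul 2).sub (integrable_const 2)).sup (integrable_const 0)).sub
      (((hg.const_mul 2).sub (integrable_const 2)).sup (integrable_const 0))).abs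

lemma alspT_maps : MapsTo alspT alspK alspK := by
  intro f hf
  have hi := L1.integrable_coeFn f
  have hq := alsp_ergodic.toMeasurePreserving.quasiMeasurePreserving.ae hf.1
  constructor
  · filter_upwards [alspT_coe f, hq] with t ht h
    rw [ht]
    unfold alspTfun
    split_ifs
    · exact ⟨le_min (by linarith [h.1]) (by norm_num), min_le_right _ _⟩
    · exact ⟨le_max_right _ _, max_le (by linarith [h.2]) (by norm_num)⟩
  · rw [integral_congr_ae (alspT_coe f)]
    have := alsp_int (fun s => min (2 * f s) 2) (fun s => max (2 * f s - 2) 0)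
      ((hi.const_mul 2).inf (integrable_const 2))
      (((hi.const_mul 2).sub (integrable_const 2)).sup (integrable_const 0))
    refine this.trans ?_
    rw [← integral_const_mul]
    refine Eq.trans ?_ hf.2
    congr 1
    ext t
    rcases le_total (f t) 1 with h | h
    · rw [min_eq_left (by linarith), max_eq_right (by linarith)]; ring
    · rw [min_eq_right (by linarith), max_eq_left (by linarith)]; ring

lemma alspT_nofix (f : Lp ℝ 1 μ₁) (hf : f ∈ alspK) : alspT f ≠ f := by
  intro hfix
  have hi := L1.integrable_coeFn f
  have hcoe : f =ᵐ[μ₁] alspTfun f := by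
    have := alspT_coe f
    rwa [hfix] at this
  have hbdd : ∀ (F : ℝ → ℝ), Continuous F → (∀ a ∈ Icc (0:ℝ) 2, |F a| ≤ 4) →
      Integrable (fun t => F (f t)) μ₁ := by
    intro F hF hb
    refine Integrable.of_bound (hF.comp_aestronglyMeasurable hi.aestronglyMeasurable) 4 ?_
    filter_upwards [hf.1] with t ht using hb _ ht
  have i1 := hbdd (fun a => (min (2 * a) 2) ^ 2) (by fun_prop) (by
    intro a ha
    have h1 : 0 ≤ min (2 * a) 2 := le_min (by linarith [ha.1]) (by norm_num)
    have h2 : min (2 * a) 2 ≤ 2 := min_le_right _ _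
    rw [abs_of_nonneg (by positivity)]
    nlinarith)
  have i2 := hbdd (fun a => (max (2 * a - 2) 0) ^ 2) (by fun_prop) (by
    intro a ha
    have h1 : 0 ≤ max (2 * a - 2) 0 := le_max_right _ _
    have h2 : max (2 * a - 2) 0 ≤ 2 := max_le (by linarith [ha.2]) (by norm_num)
    rw [abs_of_nonneg (by positivity)]
    nlinarith)
  have i3 := hbdd (fun a => a ^ 2) (by fun_prop) (by
    intro a ha
    rw [abs_of_nonneg (by positivity)]
    nlinarith [ha.1, ha.2])
  have key := alsp_int _ _ i1 i2
  have e : (fun t => f t ^ 2) =ᵐ[μ₁] fun t => if t ≤ 1/2 then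
      (fun s => (min (2 * f s) 2) ^ 2) (alspD t) else (fun s => (max (2 * f s - 2) 0) ^ 2) (alspD t) := by
    filter_upwards [hcoe] with t ht
    conv_lhs => rw [ht]
    unfold alspTfun
    split_ifs <;> rfl
  have hz : ∫ t, ((1/2) * ((min (2 * f t) 2) ^ 2 + (max (2 * f t - 2) 0) ^ 2) - f t ^ 2) ∂μ₁ = 0 := by
    have := integral_sub ((i1.add i2).const_mul (1/2)) i3
    simp only [Pi.add_apply] at this
    rw [this, integral_const_mul, ← key, ← integral_congr_ae e, sub_self]
  have hpos : ∀ a : ℝ, 0 ≤ (1/2) * ((min (2 * a) 2) ^ 2 + (max (2 * a - 2) 0) ^ 2) - a ^ 2 ∧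
      ((1/2) * ((min (2 * a) 2) ^ 2 + (max (2 * a - 2) 0) ^ 2) - a ^ 2 = 0 → a = 0 ∨ a = 2) := by
    intro a
    rcases le_total a 1 with h | h
    · rw [min_eq_left (by linarith), max_eq_right (by linarith)]
      refine ⟨by nlinarith, fun h => Or.inl (pow_eq_zero_iff (n := 2) (by norm_num) |>.1 (by linarith))⟩
    · rw [min_eq_right (by linarith), max_eq_left (by linarith)]
      refine ⟨by nlinarith [sq_nonneg (a - 2)], fun h => Or.inr ?_⟩
      have : (a - 2) ^ 2 = 0 := by linarith
      linarith [pow_eq_zero_iff (n := 2) (by norm_num) |>.1 this]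
  rw [integral_eq_zero_iff_of_nonneg (fun t => (hpos (f t)).1) (((i1.add i2).const_mul _).sub i3)] at hz
  have h02 : ∀ᵐ t ∂μ₁, f t = 0 ∨ f t = 2 := by
    filter_upwards [hz] with t ht using (hpos (f t)).2 ht
  have hinv : f ∘ alspD =ᵐ[μ₁] f := by
    filter_upwards [hcoe, alsp_ergodic.toMeasurePreserving.quasiMeasurePreserving.ae h02] with t ht h
    rw [ht, Function.comp_apply]
    unfold alspTfun
    rcases h with h | h <;> rw [h] <;> norm_num
  obtain ⟨c, hc⟩ := alsp_ergodic.ae_eq_const_of_ae_eq_comp_ae hi.aestronglyMeasurable hinv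
  have h1 : c = 1 := by
    have := hf.2
    rw [integral_congr_ae hc] at this
    simpa using this
  obtain ⟨t, ht, htval⟩ := (hc.and h02).exists
  rw [ht, Function.const_apply, h1] at htval
  norm_num at htval

/-- Alspach's theorem: `L¹([0,1])` fails the weak fixed point property.  There is a nonempty
convex weakly compact subset `K` of `L¹([0,1])` and an isometric (in particular non-expansive)
self-map of `K` without fixed points. -/
theorem alspach_L1_fails_weakFPP :
    ∃ K : Set (Lp ℝ 1 ((volume : Measure ℝ).restrict (Icc (0:ℝ) 1))),
      K.Nonempty ∧ Convex ℝ K ∧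
      IsCompact (toWeakSpace ℝ (Lp ℝ 1 ((volume : Measure ℝ).restrict (Icc (0:ℝ) 1))) '' K) ∧
      ∃ T, MapsTo T K K ∧ (∀ f ∈ K, ∀ g ∈ K, ‖T f - T g‖ = ‖f - g‖) ∧
        ∀ f ∈ K, T f ≠ f := by
  exact ⟨alspK, alspK_nonempty, alspK_convex, alspK_compact, alspT, alspT_maps,
    fun f _ g _ => alspT_iso f g, alspT_nofix⟩
end
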